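/- arXiv:math/0602249 — 3 statements merged into one kernel-verified Lean document; each statement's English description precedes it below -/
import Mathlib

section
/- Let G = C₅ + K₂ be the join of a 5-cycle and a single edge, and let E(G) = E₁ ∪ E₂ be a (3,3)-free blue-red coloring of E(G) such that all edges of the 5-cycle lie in Eᵢ (for some i ∈ {1,2}). Then the edge of K₂ also lies in Eᵢ. -/
open SimpleGraph

/-- A blue-red coloring of the edges of `G`: a partition `E(G) = E₁ ∪ E₂`,
`E₁ ∩ E₂ = ∅` (edges in `E₁` are blue, edges in `E₂` are red). -/
def IsBRColoring {V : Type*} (G : SimpleGraph V) (E1 E2 : Set (Sym2 V)) : Prop :=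
  E1 ∪ E2 = G.edgeSet ∧ E1 ∩ E2 = ∅

/-- `G` has an `n`-clique all of whose edges lie in the edge set `E`
(a monochromatic `n`-clique in the color `E`). -/
def HasMonoNClique {V : Type*} (G : SimpleGraph V) (E : Set (Sym2 V)) (n : ℕ) : Prop :=
  ∃ S : Finset V, G.IsNClique n S ∧ ∀ x ∈ S, ∀ y ∈ S, x ≠ y → s(x, y) ∈ E

/-- The blue-red coloring `E1, E2` is `(p,q)`-free: there is no blue `p`-clique
and no red `q`-clique. -/
def IsPQFree {V : Type*} (G : SimpleGraph V) (E1 E2 : Set (Sym2 V)) (p q : ℕ) : Prop :=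
  ¬ HasMonoNClique G E1 p ∧ ¬ HasMonoNClique G E2 q

/-- `G → (p,q)` : no blue-red coloring of `E(G)` is `(p,q)`-free. -/
def Arrows {V : Type*} (G : SimpleGraph V) (p q : ℕ) : Prop :=
  ∀ E1 E2 : Set (Sym2 V), IsBRColoring G E1 E2 → ¬ IsPQFree G E1 E2 p q

/-- The neighborhood of `v` in the color `E`: all neighbors `u` of `v`
with `[v,u] ∈ E`.  With `E = E1` this is `N₁(v)`, with `E = E2` it is `N₂(v)`. -/
def colorNbhd {V : Type*} (G : SimpleGraph V) (E : Set (Sym2 V)) (v : V) : Set V :=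
  {u | G.Adj v u ∧ s(v, u) ∈ E}

/-- The join `G + H` of two graphs on disjoint vertex sets: all edges of `G`,
all edges of `H`, and all pairs `[x,y]` with `x ∈ V(G)`, `y ∈ V(H)`. -/
def graphJoin {α β : Type*} (G : SimpleGraph α) (H : SimpleGraph β) :
    SimpleGraph (α ⊕ β) where
  Adj x y :=
    match x, y with
    | .inl a, .inl b => G.Adj a b
    | .inr a, .inr b => H.Adj a b
    | .inl _, .inr _ => True
    | .inr _, .inl _ => True
  symm := by constructor; rintro (a | a) (b | b) <;> simp [SimpleGraph.adj_comm]
  loopless := by constructor; rintro (a | a) <;> simp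

/-- `G` contains a copy of `H` as a subgraph: there is an injective map of the
vertices of `H` into the vertices of `G` sending edges to edges. -/
def ContainsCopy {V W : Type*} (G : SimpleGraph V) (H : SimpleGraph W) : Prop :=
  ∃ f : W ↪ V, ∀ a b : W, H.Adj a b → G.Adj (f a) (f b)

/-- `s` is an independent set of `G`: no two of its vertices are adjacent. -/
def IsIndepSet {V : Type*} (G : SimpleGraph V) (s : Set V) : Prop :=
  ∀ x ∈ s, ∀ y ∈ s, ¬ G.Adj x y

/-!
Call the edges in `E` blue and those in `F` red. Suppose that all edges of `G` are blue in a
coloring of `G + H` and that `S` is a red `k`-clique of `H`. If there is no red `(k + 1)`-clique,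
then every vertex `v` of `G` has a blue edge to some `c v ∈ S`. If there is no blue triangle, then
`c v ≠ c w` for adjacent `v` and `w`, so `c` is a proper `k`-coloring of `G`. For `k = 2` the
5-cycle has none, so no edge of `H` is red when `G` is the 5-cycle.
-/

/-- The subgraph of `G` whose edges are those of color `E`, so that monochromatic cliques of `G`
become cliques of an ordinary graph. -/
def colorSubgraph {V : Type*} (G : SimpleGraph V) (E : Set (Sym2 V)) : SimpleGraph V :=
  G ⊓ fromEdgeSet E

lemma colorSubgraph_adj {V : Type*} {G : SimpleGraph V} {E : Set (Sym2 V)} {x y : V} :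
    (colorSubgraph G E).Adj x y ↔ G.Adj x y ∧ s(x, y) ∈ E := by
  simp only [colorSubgraph, inf_adj, fromEdgeSet_adj]
  exact ⟨fun h ↦ ⟨h.1, h.2.1⟩, fun h ↦ ⟨h.1, h.2, h.1.ne⟩⟩

lemma hasMonoNClique_iff_exists_isNClique {V : Type*} {G : SimpleGraph V} {E : Set (Sym2 V)}
    {n : ℕ} : HasMonoNClique G E n ↔ ∃ S : Finset V, (colorSubgraph G E).IsNClique n S := by
  refine exists_congr fun S ↦ ⟨fun ⟨hS, hSE⟩ ↦ ⟨fun x hx y hy hxy ↦ ?_, hS.card_eq⟩,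
    fun hS ↦ ⟨hS.mono inf_le_left, fun x hx y hy hxy ↦ ?_⟩⟩
  · exact colorSubgraph_adj.2 ⟨hS.isClique hx hy hxy, hSE x hx y hy hxy⟩
  · exact (colorSubgraph_adj.1 (hS.isClique hx hy hxy)).2

lemma hasMonoNClique_two_of_adj {V : Type*} {G : SimpleGraph V} {E : Set (Sym2 V)} {x y : V}
    (hxy : G.Adj x y) (hE : s(x, y) ∈ E) : HasMonoNClique G E 2 := by
  classical
  refine hasMonoNClique_iff_exists_isNClique.2 ⟨{x, y}, ?_, Finset.card_pair hxy.ne⟩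
  rw [Finset.coe_pair, isClique_pair]
  exact fun _ ↦ colorSubgraph_adj.2 ⟨hxy, hE⟩

section Join

variable {α β : Type*} {G : SimpleGraph α} {H : SimpleGraph β} {E F : Set (Sym2 (α ⊕ β))}

lemma map_inr_colorSubgraph_le :
    (colorSubgraph H (Sym2.map Sum.inr ⁻¹' F)).map Function.Embedding.inr ≤
      colorSubgraph (graphJoin G H) F := by
  rw [map_le_iff_le_comap]
  intro x y hxy
  obtain ⟨hH, hF⟩ := colorSubgraph_adj.1 hxy
  exact colorSubgraph_adj.2 ⟨hH, hF⟩

lemma exists_mem_mk_mem_of_isNClique_right {k : ℕ} {S : Finset β}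
    (hcover : (graphJoin G H).edgeSet ⊆ E ∪ F)
    (hF : ¬ HasMonoNClique (graphJoin G H) F (k + 1))
    (hS : (colorSubgraph H (Sym2.map Sum.inr ⁻¹' F)).IsNClique k S) (v : α) :
    ∃ b ∈ S, s(Sum.inl v, Sum.inr b) ∈ E := by
  classical
  by_contra! hv
  refine hF (hasMonoNClique_iff_exists_isNClique.2
    ⟨_, ((hS.map (f := .inr)).mono map_inr_colorSubgraph_le).insert (a := Sum.inl v) ?_⟩)
  intro x hx
  obtain ⟨b, hb, rfl⟩ := Finset.mem_map.1 hx
  have hadj : (graphJoin G H).Adj (Sum.inl v) (Sum.inr b) := trivial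
  exact colorSubgraph_adj.2 ⟨hadj, (hcover hadj).resolve_left (hv b hb)⟩

lemma notMem_of_adj_left {v w : α} {b : β} (hE : ¬ HasMonoNClique (graphJoin G H) E 3)
    (hGE : Sym2.map Sum.inl '' G.edgeSet ⊆ E) (hvw : G.Adj v w)
    (hv : s(Sum.inl v, Sum.inr b) ∈ E) : s(Sum.inl w, Sum.inr b) ∉ E := by
  classical
  refine fun hw ↦ hE (hasMonoNClique_iff_exists_isNClique.2
    ⟨{Sum.inl v, Sum.inl w, Sum.inr b}, is3Clique_triple_iff.2 ⟨?_, ?_, ?_⟩⟩)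
  · exact colorSubgraph_adj.2 ⟨hvw, hGE ⟨s(v, w), hvw, rfl⟩⟩
  · exact colorSubgraph_adj.2 ⟨trivial, hv⟩
  · exact colorSubgraph_adj.2 ⟨trivial, hw⟩

theorem colorable_of_hasMonoNClique_right {k : ℕ}
    (hcover : (graphJoin G H).edgeSet ⊆ E ∪ F)
    (hE : ¬ HasMonoNClique (graphJoin G H) E 3)
    (hF : ¬ HasMonoNClique (graphJoin G H) F (k + 1))
    (hGE : Sym2.map Sum.inl '' G.edgeSet ⊆ E)
    (hH : HasMonoNClique H (Sym2.map Sum.inr ⁻¹' F) k) : G.Colorable k := by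
  obtain ⟨S, hS⟩ := hasMonoNClique_iff_exists_isNClique.1 hH
  choose c hcS hcE using exists_mem_mk_mem_of_isNClique_right hcover hF hS
  let C : G.Coloring S := Coloring.mk (fun v ↦ ⟨c v, hcS v⟩) fun {v w} hvw hc ↦ by
    have hcvw : c v = c w := congrArg Subtype.val hc
    exact notMem_of_adj_left hE hGE hvw (hcE v) (hcvw ▸ hcE w)
  simpa only [Fintype.card_coe, hS.card_eq] using C.colorable

theorem C5_join_K2_edge_color_general (hG : ¬ G.Colorable 2)
    (hcover : (graphJoin G H).edgeSet ⊆ E ∪ F)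
    (hE : ¬ HasMonoNClique (graphJoin G H) E 3) (hF : ¬ HasMonoNClique (graphJoin G H) F 3)
    (hGE : Sym2.map Sum.inl '' G.edgeSet ⊆ E) :
    Sym2.map Sum.inr '' H.edgeSet ⊆ E := by
  rintro _ ⟨⟨x, y⟩, hxy, rfl⟩
  have hadj : (graphJoin G H).Adj (Sum.inr x) (Sum.inr y) := hxy
  by_contra hxyE
  have hxyF : s(Sum.inr x, Sum.inr y) ∈ F := (hcover hadj).resolve_left hxyE
  exact hG (colorable_of_hasMonoNClique_right hcover hE hF hGE (hasMonoNClique_two_of_adj hxy hxyF))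

end Join

lemma not_colorable_two_cycleGraph_of_odd {n : ℕ} (hn : 2 ≤ n) (hodd : Odd n) :
    ¬ (cycleGraph n).Colorable 2 := by
  rw [← chromaticNumber_le_iff_colorable, chromaticNumber_cycleGraph_of_odd n hn hodd]
  decide

/-- **Lemma 2.3.** Let `G = C₅ + K₂` and let `E(G) = E₁ ∪ E₂` be a `(3,3)`-free
blue-red coloring such that `E(C₅) ⊆ Eᵢ`.  Then the edge of `K₂` also lies in `Eᵢ`. -/
theorem C5_join_K2_edge_color (E1 E2 : Set (Sym2 (Fin 5 ⊕ Fin 2)))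
    (hcol : IsBRColoring (graphJoin (cycleGraph 5) (⊤ : SimpleGraph (Fin 2))) E1 E2)
    (hfree : IsPQFree (graphJoin (cycleGraph 5) (⊤ : SimpleGraph (Fin 2))) E1 E2 3 3) :
    ∀ E ∈ ({E1, E2} : Set (Set (Sym2 (Fin 5 ⊕ Fin 2)))),
      Sym2.map Sum.inl '' (cycleGraph 5).edgeSet ⊆ E →
      s((Sum.inr 0 : Fin 5 ⊕ Fin 2), Sum.inr 1) ∈ E := by
  have hC5 : ¬ (cycleGraph 5).Colorable 2 :=
    not_colorable_two_cycleGraph_of_odd (by decide) (by decide)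
  rintro E (rfl | rfl) hcyc
  · exact C5_join_K2_edge_color_general hC5 hcol.1.ge hfree.1 hfree.2 hcyc
      ⟨s(0, 1), zero_ne_one, rfl⟩
  · exact C5_join_K2_edge_color_general hC5 (Set.union_comm E E1 ▸ hcol.1.ge) hfree.2 hfree.1 hcyc
      ⟨s(0, 1), zero_ne_one, rfl⟩
end

section
/- Let G = K₁ + C₅⁽¹⁾ + C₅⁽²⁾ + C₅⁽³⁾, where C₅⁽¹⁾, C₅⁽²⁾, C₅⁽³⁾ are disjoint copies of the 5-cycle. Let E(G) = E₁ ∪ E₂ be a blue-red coloring of E(G) such that at least one of the cycles C₅⁽¹⁾, C₅⁽²⁾, C₅⁽³⁾ is not monochromatic. Then this coloring is not (3,4)-free, i.e., it contains a blue 3-clique or a red 4-clique. -/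
open SimpleGraph

/-- The vertex set of `K₁ + C₅ + C₅ + C₅`. -/
abbrev V16 : Type := Fin 1 ⊕ (Fin 5 ⊕ (Fin 5 ⊕ Fin 5))

/-- The graph `K₁ + C₅⁽¹⁾ + C₅⁽²⁾ + C₅⁽³⁾`. -/
def G16 : SimpleGraph V16 :=
  graphJoin (⊤ : SimpleGraph (Fin 1))
    (graphJoin (cycleGraph 5) (graphJoin (cycleGraph 5) (cycleGraph 5)))

/-- Embedding of the first copy of `C₅` into the vertex set of `K₁ + C₅ + C₅ + C₅`. -/
def ι1 : Fin 5 → V16 := fun i => Sum.inr (Sum.inl i)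

/-- Embedding of the second copy of `C₅`. -/
def ι2 : Fin 5 → V16 := fun i => Sum.inr (Sum.inr (Sum.inl i))

/-- Embedding of the third copy of `C₅`. -/
def ι3 : Fin 5 → V16 := fun i => Sum.inr (Sum.inr (Sum.inr i))

/-- The vertex sets `V(C₅⁽¹⁾), V(C₅⁽²⁾), V(C₅⁽³⁾)` inside `K₁ + C₅ + C₅ + C₅`. -/
def cycVerts : Fin 3 → Set V16 := ![Set.range ι1, Set.range ι2, Set.range ι3]

/-- The edge sets `E(C₅⁽¹⁾), E(C₅⁽²⁾), E(C₅⁽³⁾)` inside `K₁ + C₅ + C₅ + C₅`. -/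
def cycEdges : Fin 3 → Set (Sym2 V16) :=
  ![Sym2.map ι1 '' (cycleGraph 5).edgeSet,
    Sym2.map ι2 '' (cycleGraph 5).edgeSet,
    Sym2.map ι3 '' (cycleGraph 5).edgeSet]

/-!
Of the three 5-cycles only this is used: they are connected and not bipartite, so for every
property of vertices each of them has an edge whose ends both have it or both lack it.

Take a `(3,4)`-free coloring and let `w` be the apex. The blue neighborhood of `w` spans only red
edges, and inside its red neighborhood `N` both colors are triangle-free. A set in `N` joined to
a non-bipartite part in `N` contains neither a triangle nor a path with one blue and one red edge.
It follows that some part `s` is entirely blue to `w`, another part `t` is entirely red to `w`, and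
the vertices of the third part `r` that are blue to `w` are independent.

If `r` is entirely red to `w`, then `r` and `t`, being connected without two-colored paths, are
monochromatic, and `s` is red. Otherwise `r` contains a path `x y z` with `x` blue and `y`, `z` red
to `w`. Choosing suitable edges of `s` and `t` forces `xy` and `yz` to be blue, after which the
colors from `x` and `y` to `t` define a proper 2-coloring of `t`, which is impossible.
-/

variable {V : Type*}

section Graph

variable {G : SimpleGraph V} {s : Set V}

lemma exists_adj_iff_of_not_isBipartite (hs : ¬ (G.induce s).IsBipartite) (P : V → Prop) :
    ∃ u ∈ s, ∃ v ∈ s, G.Adj u v ∧ (P u ↔ P v) := by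
  classical
  by_contra! hP
  let C : (G.induce s).Coloring Bool := Coloring.mk (fun v ↦ decide (P v)) fun {u v} huv ↦ by
    have := hP u u.2 v v.2 huv
    grind
  exact hs C.colorable

lemma not_isBipartite_of_triangle {a b c : V} (ha : a ∈ s) (hb : b ∈ s) (hc : c ∈ s)
    (hab : G.Adj a b) (hac : G.Adj a c) (hbc : G.Adj b c) : ¬ (G.induce s).IsBipartite := by
  rintro ⟨C⟩
  have h₁ : C ⟨a, ha⟩ ≠ C ⟨b, hb⟩ := C.valid hab
  have h₂ : C ⟨a, ha⟩ ≠ C ⟨c, hc⟩ := C.valid hac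
  have h₃ : C ⟨b, hb⟩ ≠ C ⟨c, hc⟩ := C.valid hbc
  omega

lemma exists_adj_of_preconnected (hs : (G.induce s).Preconnected) {P : V → Prop} {u v : V}
    (hu : u ∈ s) (hv : v ∈ s) (hPu : P u) (hPv : ¬ P v) :
    ∃ a ∈ s, ∃ b ∈ s, G.Adj a b ∧ P a ∧ ¬ P b := by
  obtain ⟨p⟩ := hs ⟨u, hu⟩ ⟨v, hv⟩
  obtain ⟨d, -, hda, hdb⟩ := p.exists_boundary_dart {a | P a} hPu hPv
  exact ⟨d.fst, d.fst.2, d.snd, d.snd.2, d.adj, hda, hdb⟩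

lemma exists_path_of_independent (hconn : (G.induce s).Preconnected)
    (hodd : ¬ (G.induce s).IsBipartite) {P : V → Prop}
    (hP : ∀ u ∈ s, ∀ v ∈ s, G.Adj u v → P u → ¬ P v) {p : V} (hp : p ∈ s) (hPp : P p) :
    ∃ x ∈ s, ∃ y ∈ s, ∃ z ∈ s, G.Adj x y ∧ G.Adj y z ∧ P x ∧ ¬ P y ∧ ¬ P z := by
  let M : V → Prop := fun v ↦ ¬ P v ∧ ∃ z ∈ s, G.Adj v z ∧ ¬ P z
  obtain ⟨u, hu, v, hv, huv, hiff⟩ := exists_adj_iff_of_not_isBipartite hodd P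
  have hPv : ¬ P v := fun h ↦ hP u hu v hv huv (hiff.2 h) h
  have hMu : M u := ⟨fun h ↦ hPv (hiff.1 h), v, hv, huv, hPv⟩
  obtain ⟨y, hy, x, hx, hyx, ⟨hPy, z, hz, hyz, hPz⟩, hMx⟩ :=
    exists_adj_of_preconnected hconn hu hp hMu (fun h ↦ h.1 hPp)
  have hPx : P x := by_contra fun h ↦ hMx ⟨h, y, hy, hyx.symm, hPy⟩
  exact ⟨x, hx, y, hy, z, hz, hyx.symm, hyz, hPx, hPy, hPz⟩

lemma false_of_cliqueFreeOn_three (h : G.CliqueFreeOn s 3) {a b c : V} (ha : a ∈ s) (hb : b ∈ s)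
    (hc : c ∈ s) (hab : G.Adj a b) (hac : G.Adj a c) (hbc : G.Adj b c) : False := by
  classical
  refine h ?_ (is3Clique_triple_iff.2 ⟨hab, hac, hbc⟩)
  simp [Set.insert_subset_iff, ha, hb, hc]

lemma false_of_cliqueFree_three (h : G.CliqueFree 3) {a b c : V} (hab : G.Adj a b)
    (hac : G.Adj a c) (hbc : G.Adj b c) : False :=
  false_of_cliqueFreeOn_three ((cliqueFreeOn_univ G).2 h) trivial trivial trivial hab hac hbc

lemma cliqueFreeOn_neighborSet {n : ℕ} (h : G.CliqueFree (n + 1)) (w : V) :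
    G.CliqueFreeOn (G.neighborSet w) n := by
  simpa using ((cliqueFreeOn_univ G).2 h).of_succ G (Set.mem_univ w)

lemma false_of_cliqueFree_four (h : G.CliqueFree 4) {a b c d : V} (hab : G.Adj a b)
    (hac : G.Adj a c) (had : G.Adj a d) (hbc : G.Adj b c) (hbd : G.Adj b d) (hcd : G.Adj c d) :
    False :=
  false_of_cliqueFreeOn_three (cliqueFreeOn_neighborSet h a) hab hac had hbc hbd hcd

end Graph

section Coloring

/-- All edges inside `s` of the graph `B ⊔ R` with blue part `B` and red part `R` have the same
color. The two parts may overlap. -/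
def IsMonochromaticOn (B R : SimpleGraph V) (s : Set V) : Prop :=
  (∀ u ∈ s, ∀ v ∈ s, (B ⊔ R).Adj u v → B.Adj u v) ∨ ∀ u ∈ s, ∀ v ∈ s, (B ⊔ R).Adj u v → R.Adj u v

variable {B R : SimpleGraph V} {N s t : Set V}

lemma red_of_blue_of_blue (hB : B.CliqueFree 3) {a b c : V} (hbc : (B ⊔ R).Adj b c)
    (hab : B.Adj a b) (hac : B.Adj a c) : R.Adj b c :=
  hbc.resolve_left (false_of_cliqueFree_three hB hab hac)

lemma blue_of_red_diamond (hR : R.CliqueFree 4) {a b c d : V} (hcd : (B ⊔ R).Adj c d)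
    (hab : R.Adj a b) (hac : R.Adj a c) (had : R.Adj a d) (hbc : R.Adj b c) (hbd : R.Adj b d) :
    B.Adj c d :=
  hcd.resolve_right (false_of_cliqueFree_four hR hab hac had hbc hbd)

lemma false_of_red_cone_of_blue_cone (hB : B.CliqueFree 3) (hR : R.CliqueFree 4) {w u a b c : V}
    (hab : (B ⊔ R).Adj a b) (hac : (B ⊔ R).Adj a c) (hbc : (B ⊔ R).Adj b c)
    (hwa : R.Adj w a) (hwb : R.Adj w b) (hwc : R.Adj w c)
    (hua : B.Adj u a) (hub : B.Adj u b) (huc : B.Adj u c) : False :=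
  false_of_cliqueFree_four hR hwa hwb hwc (red_of_blue_of_blue hB hab hua hub)
    (red_of_blue_of_blue hB hac hua huc) (red_of_blue_of_blue hB hbc hub huc)

lemma false_of_blue_cone_four (hB : B.CliqueFree 3) (hR : R.CliqueFree 4) {w a b c d : V}
    (hab : (B ⊔ R).Adj a b) (hac : (B ⊔ R).Adj a c) (had : (B ⊔ R).Adj a d)
    (hbc : (B ⊔ R).Adj b c) (hbd : (B ⊔ R).Adj b d) (hcd : (B ⊔ R).Adj c d)
    (hwa : B.Adj w a) (hwb : B.Adj w b) (hwc : B.Adj w c) (hwd : B.Adj w d) : False :=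
  have red {u v : V} (huv : (B ⊔ R).Adj u v) (hu : B.Adj w u) (hv : B.Adj w v) : R.Adj u v :=
    red_of_blue_of_blue hB huv hu hv
  false_of_cliqueFree_four hR (red hab hwa hwb) (red hac hwa hwc) (red had hwa hwd)
    (red hbc hwb hwc) (red hbd hwb hwd) (red hcd hwc hwd)

lemma false_of_blue_claw (hB : B.CliqueFreeOn N 3) (hR : R.CliqueFreeOn N 3) {u a b c : V}
    (hu : u ∈ N) (ha : a ∈ N) (hb : b ∈ N) (hc : c ∈ N)
    (hab : (B ⊔ R).Adj a b) (hac : (B ⊔ R).Adj a c) (hbc : (B ⊔ R).Adj b c)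
    (hua : B.Adj u a) (hub : B.Adj u b) (huc : B.Adj u c) : False :=
  false_of_cliqueFreeOn_three hR ha hb hc
    (hab.resolve_left (false_of_cliqueFreeOn_three hB hu ha hb hua hub))
    (hac.resolve_left (false_of_cliqueFreeOn_three hB hu ha hc hua huc))
    (hbc.resolve_left (false_of_cliqueFreeOn_three hB hu hb hc hub huc))

lemma false_of_blue_red_path (hB : B.CliqueFreeOn N 3) (hR : R.CliqueFreeOn N 3)
    (hsN : s ⊆ N) (htN : t ⊆ N) (hst : (B ⊔ R).IsCompleteBetween s t)
    (ht : ¬ ((B ⊔ R).induce t).IsBipartite) {y z v : V} (hy : y ∈ s) (hz : z ∈ s) (hv : v ∈ s)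
    (hzy : B.Adj z y) (hzv : R.Adj z v) : False := by
  obtain ⟨c, hc, c', hc', hcc', hiff⟩ := exists_adj_iff_of_not_isBipartite ht (B.Adj z ·)
  by_cases hzc : B.Adj z c
  · exact false_of_blue_claw hB hR (hsN hz) (hsN hy) (htN hc) (htN hc') (hst hy hc) (hst hy hc')
      hcc' hzy hzc (hiff.1 hzc)
  · have hzc' : ¬ B.Adj z c' := hiff.not.1 hzc
    exact false_of_blue_claw hR hB (hsN hz) (hsN hv) (htN hc) (htN hc') (Or.symm (hst hv hc))
      (Or.symm (hst hv hc')) (Or.symm hcc') hzv ((hst hz hc).resolve_left hzc)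
      ((hst hz hc').resolve_left hzc')

lemma false_of_triangle_join (hB : B.CliqueFreeOn N 3) (hR : R.CliqueFreeOn N 3)
    (hsN : s ⊆ N) (htN : t ⊆ N) (hst : (B ⊔ R).IsCompleteBetween s t)
    (ht : ¬ ((B ⊔ R).induce t).IsBipartite) {a b c : V} (ha : a ∈ s) (hb : b ∈ s) (hc : c ∈ s)
    (hab : (B ⊔ R).Adj a b) (hac : (B ⊔ R).Adj a c) (hbc : (B ⊔ R).Adj b c) : False := by
  have path {y z v : V} := @false_of_blue_red_path V B R N s t hB hR hsN htN hst ht y z v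
  rcases hab with hab | hab <;> rcases hac with hac | hac <;> rcases hbc with hbc | hbc
  · exact false_of_cliqueFreeOn_three hB (hsN ha) (hsN hb) (hsN hc) hab hac hbc
  · exact path ha hb hc hab.symm hbc
  · exact path hb ha hc hab hac
  · exact path hb ha hc hab hac
  · exact path hc ha hb hac hab
  · exact path hc ha hb hac hab
  · exact path hc hb ha hbc hab.symm
  · exact false_of_cliqueFreeOn_three hR (hsN ha) (hsN hb) (hsN hc) hab hac hbc

lemma isMonochromaticOn_of_preconnected (hB : B.CliqueFreeOn N 3) (hR : R.CliqueFreeOn N 3)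
    (hsN : s ⊆ N) (htN : t ⊆ N) (hst : (B ⊔ R).IsCompleteBetween s t)
    (hs : ((B ⊔ R).induce s).Preconnected) (ht : ¬ ((B ⊔ R).induce t).IsBipartite) :
    IsMonochromaticOn B R s := by
  have path {y z v : V} := @false_of_blue_red_path V B R N s t hB hR hsN htN hst ht y z v
  unfold IsMonochromaticOn
  by_contra! ⟨⟨u, hu, v, hv, huv, huv'⟩, p, hp, q, hq, hpq, hpq'⟩
  obtain ⟨a, ha, b, hb, hab, ⟨c, hc, hac⟩, hRb⟩ :=
    exists_adj_of_preconnected hs (P := fun z ↦ ∃ v ∈ s, R.Adj z v) hu hp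
      ⟨v, hv, huv.resolve_left huv'⟩
      fun ⟨v, hv, hpv⟩ ↦ path hq hp hv (hpq.resolve_right hpq') hpv
  have hab' : B.Adj a b := hab.resolve_right fun h ↦ hRb ⟨a, ha, h.symm⟩
  exact path hb ha hc hab' hac

end Coloring

/-- A `(3,4)`-free coloring with blue part `B` and red part `R`, together with a path `x y z` in
one of three pairwise joined sets `r`, `s`, `t` and a vertex `w` that is blue to `x` and all of `s`
but red to `y`, `z` and all of `t`. There is no such configuration: see `MixedPath.false`. -/
structure MixedPath (B R : SimpleGraph V) (w : V) (r s t : Set V) (x y z : V) : Prop where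
  blue_free : B.CliqueFree 3
  red_free : R.CliqueFree 4
  join_rs : (B ⊔ R).IsCompleteBetween r s
  join_rt : (B ⊔ R).IsCompleteBetween r t
  join_st : (B ⊔ R).IsCompleteBetween s t
  odd_s : ¬ ((B ⊔ R).induce s).IsBipartite
  odd_t : ¬ ((B ⊔ R).induce t).IsBipartite
  x_mem : x ∈ r
  y_mem : y ∈ r
  z_mem : z ∈ r
  adj_xy : (B ⊔ R).Adj x y
  adj_yz : (B ⊔ R).Adj y z
  blue_wx : B.Adj w x
  red_wy : R.Adj w y
  red_wz : R.Adj w z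
  blue_ws : s ⊆ B.neighborSet w
  red_wt : t ⊆ R.neighborSet w

namespace MixedPath

variable {B R : SimpleGraph V} {w x y z : V} {r s t : Set V} {a a' c c' : V}

lemma red_of_mem_s (h : MixedPath B R w r s t x y z) (ha : a ∈ s) (ha' : a' ∈ s)
    (haa' : (B ⊔ R).Adj a a') : R.Adj a a' :=
  red_of_blue_of_blue h.blue_free haa' (h.blue_ws ha) (h.blue_ws ha')

lemma red_x_s (h : MixedPath B R w r s t x y z) (ha : a ∈ s) : R.Adj a x :=
  (red_of_blue_of_blue h.blue_free (h.join_rs h.x_mem ha) h.blue_wx (h.blue_ws ha)).symm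

lemma red_s_t (h : MixedPath B R w r s t x y z) (ha : a ∈ s) (hc : c ∈ t) (hac : ¬ B.Adj a c) :
    R.Adj a c :=
  (h.join_st ha hc).resolve_left hac

lemma blue_of_not_blue_s (h : MixedPath B R w r s t x y z) (ha : a ∈ s) (ha' : a' ∈ s)
    (haa' : (B ⊔ R).Adj a a') {v : V} (hv : v ∈ r) (hc : c ∈ t) (hav : R.Adj a v)
    (ha'v : R.Adj a' v) (hac : ¬ B.Adj a c) (ha'c : ¬ B.Adj a' c) : B.Adj v c :=
  blue_of_red_diamond h.red_free (h.join_rt hv hc) (h.red_of_mem_s ha ha' haa') hav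
    (h.red_s_t ha hc hac) ha'v (h.red_s_t ha' hc ha'c)

lemma blue_x_of_not_blue_s (h : MixedPath B R w r s t x y z) (ha : a ∈ s) (ha' : a' ∈ s)
    (haa' : (B ⊔ R).Adj a a') (hc : c ∈ t) (hac : ¬ B.Adj a c) (ha'c : ¬ B.Adj a' c) :
    B.Adj x c :=
  h.blue_of_not_blue_s ha ha' haa' h.x_mem hc (h.red_x_s ha) (h.red_x_s ha') hac ha'c

lemma blue_edge_s_t (h : MixedPath B R w r s t x y z) (ha : a ∈ s) (ha' : a' ∈ s)
    (haa' : (B ⊔ R).Adj a a') (hc : c ∈ t) (hc' : c' ∈ t) (hcc' : (B ⊔ R).Adj c c') :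
    (B.Adj a c ∨ B.Adj a' c) ∨ (B.Adj a c' ∨ B.Adj a' c') := by
  by_contra! ⟨⟨hac, ha'c⟩, hac', ha'c'⟩
  have hxc : B.Adj x c := h.blue_x_of_not_blue_s ha ha' haa' hc hac ha'c
  have hxc' : B.Adj x c' := h.blue_x_of_not_blue_s ha ha' haa' hc' hac' ha'c'
  exact false_of_cliqueFree_four h.red_free (h.red_of_mem_s ha ha' haa') (h.red_s_t ha hc hac)
    (h.red_s_t ha hc' hac') (h.red_s_t ha' hc ha'c) (h.red_s_t ha' hc' ha'c')
    (red_of_blue_of_blue h.blue_free hcc' hxc hxc')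

lemma red_t_of_not_blue_x (h : MixedPath B R w r s t x y z) (hc : c ∈ t) (hc' : c' ∈ t)
    (hcc' : (B ⊔ R).Adj c c') (hxc : ¬ B.Adj x c) (hxc' : ¬ B.Adj x c') : R.Adj c c' := by
  refine hcc'.resolve_left fun hblue ↦ ?_
  obtain ⟨a, ha, a', ha', haa', hiff⟩ := exists_adj_iff_of_not_isBipartite h.odd_s (B.Adj · c)
  by_cases hac : B.Adj a c
  · have not_blue {b : V} (hbc : B.Adj b c) : ¬ B.Adj b c' := fun hbc' ↦
      false_of_cliqueFree_three h.blue_free hbc hbc' hblue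
    exact hxc' (h.blue_x_of_not_blue_s ha ha' haa' hc' (not_blue hac) (not_blue (hiff.1 hac)))
  · exact hxc (h.blue_x_of_not_blue_s ha ha' haa' hc hac (hiff.not.1 hac))

lemma blue_s_of_not_blue_x (h : MixedPath B R w r s t x y z) (ha : a ∈ s) (hc : c ∈ t)
    (hc' : c' ∈ t) (hcc' : (B ⊔ R).Adj c c') (hxc : ¬ B.Adj x c) (hxc' : ¬ B.Adj x c') :
    B.Adj a c ∨ B.Adj a c' := by
  by_contra! ⟨hac, hac'⟩
  exact false_of_cliqueFree_four h.red_free (h.red_x_s ha) (h.red_s_t ha hc hac)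
    (h.red_s_t ha hc' hac') ((h.join_rt h.x_mem hc).resolve_left hxc)
    ((h.join_rt h.x_mem hc').resolve_left hxc') (h.red_t_of_not_blue_x hc hc' hcc' hxc hxc')

lemma blue_t_of_red (h : MixedPath B R w r s t x y z) {v : V} (hv : R.Adj w v) (hc : c ∈ t)
    (hc' : c' ∈ t) (hcc' : (B ⊔ R).Adj c c') (hvc : R.Adj v c) (hvc' : R.Adj v c') :
    B.Adj c c' :=
  hcc'.resolve_right (false_of_cliqueFree_four h.red_free hv (h.red_wt hc) (h.red_wt hc') hvc hvc')

lemma false_of_red_claw (h : MixedPath B R w r s t x y z) (hc : c ∈ t) (hc' : c' ∈ t)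
    (hcc' : (B ⊔ R).Adj c c') (hyz : R.Adj y z) (hyc : R.Adj y c) (hyc' : R.Adj y c') : False :=
  have hB := h.blue_free.cliqueFreeOn (s := R.neighborSet w)
  false_of_blue_claw (cliqueFreeOn_neighborSet h.red_free w) hB h.red_wy h.red_wz (h.red_wt hc)
    (h.red_wt hc') (Or.symm (h.join_rt h.z_mem hc)) (Or.symm (h.join_rt h.z_mem hc')) (Or.symm hcc')
    hyz hyc hyc'

lemma not_blue_y_edge (h : MixedPath B R w r s t x y z) (ha : a ∈ s) (ha' : a' ∈ s)
    (haa' : (B ⊔ R).Adj a a') (hya : B.Adj y a) : ¬ B.Adj y a' := by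
  intro hya'
  have red_y {c : V} (hc : c ∈ t) : (B.Adj a c ∨ B.Adj a' c) → R.Adj y c := by
    rintro (hac | ha'c)
    · exact red_of_blue_of_blue h.blue_free (h.join_rt h.y_mem hc) hya.symm hac
    · exact red_of_blue_of_blue h.blue_free (h.join_rt h.y_mem hc) hya'.symm ha'c
  have hyz : B.Adj y z := by
    refine h.adj_yz.resolve_right fun hyz ↦ ?_
    obtain ⟨c, hc, c', hc', hcc', hiff⟩ :=
      exists_adj_iff_of_not_isBipartite h.odd_t fun c ↦ B.Adj a c ∨ B.Adj a' c
    have hS : B.Adj a c ∨ B.Adj a' c :=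
      (h.blue_edge_s_t ha ha' haa' hc hc' hcc').elim id hiff.2
    exact h.false_of_red_claw hc hc' hcc' hyz (red_y hc hS) (red_y hc' (hiff.1 hS))
  have red_z {b : V} (hb : b ∈ s) (hyb : B.Adj y b) : R.Adj b z :=
    red_of_blue_of_blue h.blue_free (h.join_rs h.z_mem hb).symm hyb hyz
  have red_y_t {c : V} (hc : c ∈ t) : R.Adj y c := by
    by_cases hS : B.Adj a c ∨ B.Adj a' c
    · exact red_y hc hS
    rw [not_or] at hS
    have hzc : B.Adj z c := h.blue_of_not_blue_s ha ha' haa' h.z_mem hc (red_z ha hya)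
      (red_z ha' hya') hS.1 hS.2
    exact red_of_blue_of_blue h.blue_free (h.join_rt h.y_mem hc) hyz.symm hzc
  obtain ⟨c, hc, c', hc', hcc', hiff⟩ := exists_adj_iff_of_not_isBipartite h.odd_t (B.Adj x ·)
  have hblue : B.Adj c c' := h.blue_t_of_red h.red_wy hc hc' hcc' (red_y_t hc) (red_y_t hc')
  by_cases hxc : B.Adj x c
  · exact false_of_cliqueFree_three h.blue_free hxc (hiff.1 hxc) hblue
  · exact false_of_cliqueFree_four h.red_free h.red_wy (h.red_wt hc) (h.red_wt hc') (red_y_t hc)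
      (red_y_t hc') (h.red_t_of_not_blue_x hc hc' hcc' hxc (hiff.not.1 hxc))

lemma blue_xy (h : MixedPath B R w r s t x y z) : B.Adj x y := by
  refine h.adj_xy.resolve_right fun hxy ↦ ?_
  obtain ⟨a, ha, a', ha', haa', hiff⟩ := exists_adj_iff_of_not_isBipartite h.odd_s (B.Adj y ·)
  have hya : ¬ B.Adj y a := fun hya ↦ h.not_blue_y_edge ha ha' haa' hya (hiff.1 hya)
  have hya' : ¬ B.Adj y a' := hiff.not.1 hya
  exact false_of_cliqueFree_four h.red_free (h.red_of_mem_s ha ha' haa') (h.red_x_s ha)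
    ((h.join_rs h.y_mem ha).resolve_left hya).symm (h.red_x_s ha')
    ((h.join_rs h.y_mem ha').resolve_left hya').symm hxy

lemma blue_s_of_not_blue_y (h : MixedPath B R w r s t x y z) (ha : a ∈ s) (ha' : a' ∈ s)
    (haa' : (B ⊔ R).Adj a a') (hya : ¬ B.Adj y a) (hya' : ¬ B.Adj y a') (hc : c ∈ t) :
    B.Adj a c ∨ B.Adj a' c := by
  by_contra! ⟨hac, ha'c⟩
  have hxc : B.Adj x c := h.blue_x_of_not_blue_s ha ha' haa' hc hac ha'c
  have hyc : B.Adj y c := h.blue_of_not_blue_s ha ha' haa' h.y_mem hc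
    ((h.join_rs h.y_mem ha).resolve_left hya).symm
    ((h.join_rs h.y_mem ha').resolve_left hya').symm hac ha'c
  exact false_of_cliqueFree_three h.blue_free h.blue_xy hxc hyc

lemma not_blue_x_of_blue_y (h : MixedPath B R w r s t x y z) (hyc : B.Adj y c) : ¬ B.Adj x c :=
  fun hxc ↦ false_of_cliqueFree_three h.blue_free h.blue_xy hxc hyc

lemma not_blue_x_edge (h : MixedPath B R w r s t x y z) (hc : c ∈ t) (hc' : c' ∈ t)
    (hcc' : (B ⊔ R).Adj c c') (hxc : B.Adj x c) : ¬ B.Adj x c' := fun hxc' ↦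
  have red_y {c : V} (hc : c ∈ t) : B.Adj x c → R.Adj y c :=
    red_of_blue_of_blue h.blue_free (h.join_rt h.y_mem hc) h.blue_xy
  false_of_cliqueFree_three h.blue_free hxc hxc'
    (h.blue_t_of_red h.red_wy hc hc' hcc' (red_y hc hxc) (red_y hc' hxc'))

lemma false_of_blue_triangle_z (h : MixedPath B R w r s t x y z) (hc : c ∈ t) (hc' : c' ∈ t)
    (hcc' : (B ⊔ R).Adj c c') (hza : B.Adj z a) (hac : B.Adj a c) (hac' : B.Adj a c') : False :=
  false_of_red_cone_of_blue_cone h.blue_free h.red_free (h.join_rt h.z_mem hc)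
    (h.join_rt h.z_mem hc') hcc' h.red_wz (h.red_wt hc) (h.red_wt hc') hza.symm hac hac'

lemma not_red_yz (h : MixedPath B R w r s t x y z) : ¬ R.Adj y z := by
  intro hyz
  have not_blue_ya {a : V} (ha : a ∈ s) : ¬ B.Adj y a := by
    intro hya
    obtain ⟨c, hc, c', hc', hcc', hiff⟩ := exists_adj_iff_of_not_isBipartite h.odd_t (B.Adj y ·)
    by_cases hyc : B.Adj y c
    · rcases h.blue_s_of_not_blue_x ha hc hc' hcc' (h.not_blue_x_of_blue_y hyc)
        (h.not_blue_x_of_blue_y (hiff.1 hyc)) with hac | hac'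
      · exact false_of_cliqueFree_three h.blue_free hya hyc hac
      · exact false_of_cliqueFree_three h.blue_free hya (hiff.1 hyc) hac'
    · exact h.false_of_red_claw hc hc' hcc' hyz ((h.join_rt h.y_mem hc).resolve_left hyc)
        ((h.join_rt h.y_mem hc').resolve_left (hiff.not.1 hyc))
  obtain ⟨a, ha, a', ha', haa', hiff⟩ := exists_adj_iff_of_not_isBipartite h.odd_s (B.Adj z ·)
  by_cases hza : B.Adj z a
  · obtain ⟨c, hc, c', hc', hcc', hiff'⟩ := exists_adj_iff_of_not_isBipartite h.odd_t (B.Adj a ·)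
    have blue_s {c : V} (hc : c ∈ t) : B.Adj a c ∨ B.Adj a' c :=
      h.blue_s_of_not_blue_y ha ha' haa' (not_blue_ya ha) (not_blue_ya ha') hc
    by_cases hac : B.Adj a c
    · exact h.false_of_blue_triangle_z hc hc' hcc' hza hac (hiff'.1 hac)
    · exact h.false_of_blue_triangle_z hc hc' hcc' (hiff.1 hza) ((blue_s hc).resolve_left hac)
        ((blue_s hc').resolve_left (hiff'.not.1 hac))
  · have red_ya {a : V} (ha : a ∈ s) : R.Adj a y :=
      ((h.join_rs h.y_mem ha).resolve_left (not_blue_ya ha)).symm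
    exact false_of_cliqueFree_four h.red_free (h.red_of_mem_s ha ha' haa') (red_ya ha)
      ((h.join_rs h.z_mem ha).resolve_left hza).symm (red_ya ha')
      ((h.join_rs h.z_mem ha').resolve_left (hiff.not.1 hza)).symm hyz

lemma blue_yz (h : MixedPath B R w r s t x y z) : B.Adj y z :=
  h.adj_yz.resolve_right h.not_red_yz

lemma not_blue_y_edge_t (h : MixedPath B R w r s t x y z) (hc : c ∈ t) (hc' : c' ∈ t)
    (hcc' : (B ⊔ R).Adj c c') (hyc : B.Adj y c) : ¬ B.Adj y c' :=
  false_of_blue_claw h.blue_free.cliqueFreeOn (cliqueFreeOn_neighborSet h.red_free w)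
    h.red_wy h.red_wz (h.red_wt hc) (h.red_wt hc') (h.join_rt h.z_mem hc) (h.join_rt h.z_mem hc')
    hcc' h.blue_yz hyc

lemma blue_of_red_edge_t (h : MixedPath B R w r s t x y z) {v : V} (hv : v ∈ r) (hwv : R.Adj w v)
    (hc : c ∈ t) (hc' : c' ∈ t) (hcc' : R.Adj c c') : B.Adj v c ∨ B.Adj v c' := by
  by_contra! ⟨hvc, hvc'⟩
  exact false_of_cliqueFree_four h.red_free hwv (h.red_wt hc) (h.red_wt hc')
    ((h.join_rt hv hc).resolve_left hvc) ((h.join_rt hv hc').resolve_left hvc') hcc'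

lemma not_blue_of_blue_y_of_edge_s (h : MixedPath B R w r s t x y z) {p q d : V} (hp : p ∈ t)
    (hq : q ∈ t) (hd : d ∈ t) (hpq : (B ⊔ R).Adj p q) (hxp : ¬ B.Adj x p) (hxq : ¬ B.Adj x q)
    (hyp : B.Adj y p) (ha : a ∈ s) (ha' : a' ∈ s) (haa' : (B ⊔ R).Adj a a')
    (hiff : B.Adj a q ↔ B.Adj a' q) (hya : B.Adj y a) : ¬ B.Adj q d := by
  intro hqd
  have hap : ¬ B.Adj a p := false_of_cliqueFree_three h.blue_free hya hyp
  have haq : B.Adj a q := (h.blue_s_of_not_blue_x ha hp hq hpq hxp hxq).resolve_left hap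
  have ha'q : B.Adj a' q := hiff.1 haq
  have ha'p : B.Adj a' p := by
    by_contra ha'p
    exact hxp (h.blue_x_of_not_blue_s ha ha' haa' hp hap ha'p)
  have hza : R.Adj a z :=
    red_of_blue_of_blue h.blue_free (h.join_rs h.z_mem ha).symm hya h.blue_yz
  have hza' : R.Adj a' z := (h.join_rs h.z_mem ha').symm.resolve_left fun hza' ↦
    h.false_of_blue_triangle_z hp hq hpq hza'.symm ha'p ha'q
  have hzd : B.Adj z d := h.blue_of_not_blue_s ha ha' haa' h.z_mem hd hza hza'
    (fun had ↦ false_of_cliqueFree_three h.blue_free haq had hqd)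
    (fun ha'd ↦ false_of_cliqueFree_three h.blue_free ha'q ha'd hqd)
  have hzp : ¬ B.Adj z p := fun hzp ↦ false_of_cliqueFree_three h.blue_free h.blue_yz hyp hzp
  have hzq : B.Adj z q := (h.blue_of_red_edge_t h.z_mem h.red_wz hp hq
    (h.red_t_of_not_blue_x hp hq hpq hxp hxq)).resolve_left hzp
  exact false_of_cliqueFree_three h.blue_free hzq hzd hqd

lemma not_blue_of_blue_y (h : MixedPath B R w r s t x y z) {p q d : V} (hp : p ∈ t)
    (hq : q ∈ t) (hd : d ∈ t) (hpq : (B ⊔ R).Adj p q) (hxp : ¬ B.Adj x p) (hxq : ¬ B.Adj x q)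
    (hyp : B.Adj y p) : ¬ B.Adj q d := by
  intro hqd
  obtain ⟨a, ha, a', ha', haa', hiff⟩ := exists_adj_iff_of_not_isBipartite h.odd_s (B.Adj · q)
  by_cases hya : B.Adj y a
  · exact h.not_blue_of_blue_y_of_edge_s hp hq hd hpq hxp hxq hyp ha ha' haa' hiff hya hqd
  by_cases hya' : B.Adj y a'
  · exact h.not_blue_of_blue_y_of_edge_s hp hq hd hpq hxp hxq hyp ha' ha haa'.symm hiff.symm hya'
      hqd
  have blue_s {c : V} (hc : c ∈ t) := h.blue_s_of_not_blue_y ha ha' haa' hya hya' hc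
  have haq : B.Adj a q := (blue_s hq).elim id hiff.2
  rcases blue_s hd with had | ha'd
  · exact false_of_cliqueFree_three h.blue_free haq had hqd
  · exact false_of_cliqueFree_three h.blue_free (hiff.1 haq) ha'd hqd

lemma blue_y_of_mixed_neighbors (h : MixedPath B R w r s t x y z) {u u' v : V} (hu : u ∈ t)
    (hu' : u' ∈ t) (hv : v ∈ t) (hvu : (B ⊔ R).Adj v u) (hvu' : (B ⊔ R).Adj v u')
    (hxv : ¬ B.Adj x v) (hxu : B.Adj x u) (hxu' : ¬ B.Adj x u') : B.Adj y v := by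
  by_contra hyv
  have hyu' : B.Adj y u' := (h.blue_of_red_edge_t h.y_mem h.red_wy hv hu'
    (h.red_t_of_not_blue_x hv hu' hvu' hxv hxu')).resolve_left hyv
  have hred : R.Adj v u :=
    hvu.resolve_left (h.not_blue_of_blue_y hu' hv hu hvu'.symm hxu' hxv hyu')
  have hyu : B.Adj y u := (h.blue_of_red_edge_t h.y_mem h.red_wy hv hu hred).resolve_left hyv
  exact h.not_blue_x_of_blue_y hyu hxu

lemma false (h : MixedPath B R w r s t x y z) : False := by
  -- The class of `u` in the 2-coloring of `t` is decided by `x` if possible, else by `y`, and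
  -- otherwise all neighbors of `u` fall in the same class by `blue_y_of_mixed_neighbors`.
  let S : V → Prop := fun u ↦
    ¬ B.Adj x u ∧ (B.Adj y u ∨ ∀ v ∈ t, (B ⊔ R).Adj u v → B.Adj x v)
  have blue_y_of_mem {u v : V} (hv : v ∈ t) (huv : (B ⊔ R).Adj u v) (hSu : S u) (hSv : S v) :
      B.Adj y u :=
    hSu.2.resolve_right fun hall ↦ hSv.1 (hall v hv huv)
  have mem_of_blue_x {u v : V} (hu : u ∈ t) (hv : v ∈ t) (huv : (B ⊔ R).Adj u v)
      (hxu : B.Adj x u) : S v := by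
    have hxv : ¬ B.Adj x v := h.not_blue_x_edge hu hv huv hxu
    refine ⟨hxv, or_iff_not_imp_right.2 fun hall ↦ ?_⟩
    push Not at hall
    obtain ⟨u', hu', hvu', hxu'⟩ := hall
    exact h.blue_y_of_mixed_neighbors hu hu' hv huv.symm hvu' hxv hxu hxu'
  obtain ⟨u, hu, v, hv, huv, hiff⟩ := exists_adj_iff_of_not_isBipartite h.odd_t S
  by_cases hSu : S u
  · have hSv : S v := hiff.1 hSu
    exact h.not_blue_y_edge_t hu hv huv (blue_y_of_mem hv huv hSu hSv)
      (blue_y_of_mem hu huv.symm hSv hSu)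
  · have hSv : ¬ S v := hiff.not.1 hSu
    have hxu : ¬ B.Adj x u := fun hxu ↦ hSv (mem_of_blue_x hu hv huv hxu)
    have hxv : ¬ B.Adj x v := fun hxv ↦ hSu (mem_of_blue_x hv hu huv.symm hxv)
    rcases h.blue_of_red_edge_t h.y_mem h.red_wy hu hv
      (h.red_t_of_not_blue_x hu hv huv hxu hxv) with hyu | hyv
    · exact hSu ⟨hxu, Or.inl hyu⟩
    · exact hSv ⟨hxv, Or.inl hyv⟩

end MixedPath

/-- The vertex `w` and the sets `s 0`, `s 1`, `s 2` span in `G` a join `K₁ + H₀ + H₁ + H₂` of a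
vertex with three connected non-bipartite graphs. -/
structure IsOddTripleJoin (G : SimpleGraph V) (w : V) (s : Fin 3 → Set V) : Prop where
  apex_adj : ∀ i, ∀ v ∈ s i, G.Adj w v
  join : Pairwise fun i j ↦ G.IsCompleteBetween (s i) (s j)
  preconnected : ∀ i, (G.induce (s i)).Preconnected
  odd : ∀ i, ¬ (G.induce (s i)).IsBipartite

namespace IsOddTripleJoin

variable {B R : SimpleGraph V} {w : V} {s : Fin 3 → Set V}

lemma exists_blue_link_edge (h : IsOddTripleJoin (B ⊔ R) w s) (hB : B.CliqueFree 3)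
    (hR : R.CliqueFree 4) :
    ∃ i, ∃ u ∈ s i, ∃ v ∈ s i, (B ⊔ R).Adj u v ∧ B.Adj w u ∧ B.Adj w v := by
  by_contra! hno
  have red_edge (i : Fin 3) :
      ∃ u ∈ s i, ∃ v ∈ s i, (B ⊔ R).Adj u v ∧ R.Adj w u ∧ R.Adj w v := by
    obtain ⟨u, hu, v, hv, huv, hiff⟩ := exists_adj_iff_of_not_isBipartite (h.odd i) (B.Adj w ·)
    have hwu : ¬ B.Adj w u := fun hwu ↦ hno i u hu v hv huv hwu (hiff.1 hwu)
    exact ⟨u, hu, v, hv, huv, (h.apex_adj i u hu).resolve_left hwu,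
      (h.apex_adj i v hv).resolve_left (hiff.not.1 hwu)⟩
  choose u hu v hv huv hwu hwv using red_edge
  have h01 : (B ⊔ R).IsCompleteBetween (s 0) (s 1) := h.join (by decide)
  have h02 : (B ⊔ R).IsCompleteBetween (s 0) (s 2) := h.join (by decide)
  have h12 : (B ⊔ R).IsCompleteBetween (s 1) (s 2) := h.join (by decide)
  have hleft : {u 0, v 0, u 1} ⊆ R.neighborSet w := by
    rintro _ (rfl | rfl | rfl)
    exacts [hwu 0, hwv 0, hwu 1]
  have hright : {v 1, u 2, v 2} ⊆ R.neighborSet w := by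
    rintro _ (rfl | rfl | rfl)
    exacts [hwv 1, hwu 2, hwv 2]
  have hjoin : (B ⊔ R).IsCompleteBetween {u 0, v 0, u 1} {v 1, u 2, v 2} := by
    rintro _ (rfl | rfl | rfl) _ (rfl | rfl | rfl)
    exacts [h01 (hu 0) (hv 1), h02 (hu 0) (hu 2), h02 (hu 0) (hv 2),
      h01 (hv 0) (hv 1), h02 (hv 0) (hu 2), h02 (hv 0) (hv 2),
      huv 1, h12 (hu 1) (hu 2), h12 (hu 1) (hv 2)]
  have hodd : ¬ ((B ⊔ R).induce {v 1, u 2, v 2}).IsBipartite :=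
    not_isBipartite_of_triangle (.inl rfl) (.inr (.inl rfl)) (.inr (.inr rfl))
      (h12 (hv 1) (hu 2)) (h12 (hv 1) (hv 2)) (huv 2)
  exact false_of_triangle_join hB.cliqueFreeOn (cliqueFreeOn_neighborSet hR w) hleft hright hjoin
    hodd (.inl rfl) (.inr (.inl rfl)) (.inr (.inr rfl)) (huv 0) (h01 (hu 0) (hu 1))
    (h01 (hv 0) (hu 1))

lemma not_blue_link_edge (h : IsOddTripleJoin (B ⊔ R) w s) (hB : B.CliqueFree 3)
    (hR : R.CliqueFree 4) {i j : Fin 3} (hij : i ≠ j) {u v p q : V} (hu : u ∈ s i) (hv : v ∈ s i)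
    (huv : (B ⊔ R).Adj u v) (hwu : B.Adj w u) (hwv : B.Adj w v) (hp : p ∈ s j) (hq : q ∈ s j)
    (hpq : (B ⊔ R).Adj p q) (hwp : B.Adj w p) : ¬ B.Adj w q :=
  false_of_blue_cone_four hB hR huv (h.join hij hu hp) (h.join hij hu hq) (h.join hij hv hp)
    (h.join hij hv hq) hpq hwu hwv hwp

lemma exists_red_part (h : IsOddTripleJoin (B ⊔ R) w s) (hB : B.CliqueFree 3)
    (hR : R.CliqueFree 4) {i : Fin 3} {u v : V} (hu : u ∈ s i) (hv : v ∈ s i)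
    (huv : (B ⊔ R).Adj u v) (hwu : B.Adj w u) (hwv : B.Adj w v) :
    ∃ j k, i ≠ j ∧ i ≠ k ∧ j ≠ k ∧ s k ⊆ R.neighborSet w := by
  obtain ⟨j, k, hij, hik, hjk⟩ : ∃ j k, i ≠ j ∧ i ≠ k ∧ j ≠ k :=
    ⟨i + 1, i + 2, by grind⟩
  by_contra! hno
  have exists_blue {j k : Fin 3} (hij : i ≠ j) (hik : i ≠ k) (hjk : j ≠ k) :
      ∃ p ∈ s k, B.Adj w p := by
    obtain ⟨p, hp, hwp⟩ := Set.not_subset.1 (hno j k hij hik hjk)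
    exact ⟨p, hp, (h.apex_adj k p hp).resolve_right hwp⟩
  obtain ⟨p, hp, hwp⟩ := exists_blue hik hij hjk.symm
  obtain ⟨q, hq, hwq⟩ := exists_blue hij hik hjk
  exact false_of_blue_cone_four hB hR huv (h.join hij hu hp) (h.join hik hu hq) (h.join hij hv hp)
    (h.join hik hv hq) (h.join hjk hp hq) hwu hwv hwp hwq

lemma subset_blue_neighborSet (h : IsOddTripleJoin (B ⊔ R) w s) (hB : B.CliqueFree 3)
    (hR : R.CliqueFree 4) {i j k : Fin 3} (hij : i ≠ j) (hik : i ≠ k) (hjk : j ≠ k)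
    (hj : ∀ p ∈ s j, ∀ q ∈ s j, (B ⊔ R).Adj p q → B.Adj w p → ¬ B.Adj w q)
    (hk : s k ⊆ R.neighborSet w) : s i ⊆ B.neighborSet w := by
  refine fun a ha ↦ (h.apex_adj i a ha).resolve_right fun hwa ↦ ?_
  obtain ⟨p, hp, q, hq, hpq, hiff⟩ := exists_adj_iff_of_not_isBipartite (h.odd j) (B.Adj w ·)
  have hwp : ¬ B.Adj w p := fun hwp ↦ hj p hp q hq hpq hwp (hiff.1 hwp)
  have hlink : {a, p, q} ⊆ R.neighborSet w := by
    rintro _ (rfl | rfl | rfl)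
    exacts [hwa, (h.apex_adj j _ hp).resolve_left hwp,
      (h.apex_adj j _ hq).resolve_left (hiff.not.1 hwp)]
  have hjoin : (B ⊔ R).IsCompleteBetween {a, p, q} (s k) := by
    rintro _ (rfl | rfl | rfl)
    exacts [h.join hik ha, h.join hjk hp, h.join hjk hq]
  exact false_of_triangle_join hB.cliqueFreeOn (cliqueFreeOn_neighborSet hR w) hlink hk hjoin
    (h.odd k) (.inl rfl) (.inr (.inl rfl)) (.inr (.inr rfl)) (h.join hij ha hp) (h.join hij ha hq)
    hpq

theorem isMonochromaticOn (h : IsOddTripleJoin (B ⊔ R) w s) (hB : B.CliqueFree 3)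
    (hR : R.CliqueFree 4) (l : Fin 3) : IsMonochromaticOn B R (s l) := by
  obtain ⟨i, u, hu, v, hv, huv, hwu, hwv⟩ := h.exists_blue_link_edge hB hR
  obtain ⟨j, k, hij, hik, hjk, hk⟩ := h.exists_red_part hB hR hu hv huv hwu hwv
  have hj : ∀ p ∈ s j, ∀ q ∈ s j, (B ⊔ R).Adj p q → B.Adj w p → ¬ B.Adj w q :=
    fun p hp q hq ↦ h.not_blue_link_edge hB hR hij hu hv huv hwu hwv hp hq
  have hi : s i ⊆ B.neighborSet w := h.subset_blue_neighborSet hB hR hij hik hjk hj hk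
  have hjR : s j ⊆ R.neighborSet w := by
    refine fun p hp ↦ (h.apex_adj j p hp).resolve_left fun hwp ↦ ?_
    obtain ⟨x, hx, y, hy, z, hz, hxy, hyz, hwx, hwy, hwz⟩ :=
      exists_path_of_independent (h.preconnected j) (h.odd j) hj hp hwp
    exact MixedPath.false (w := w) (r := s j) (s := s i) (t := s k)
      { blue_free := hB, red_free := hR
        join_rs := h.join hij.symm, join_rt := h.join hjk, join_st := h.join hik
        odd_s := h.odd i, odd_t := h.odd k
        x_mem := hx, y_mem := hy, z_mem := hz, adj_xy := hxy, adj_yz := hyz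
        blue_wx := hwx
        red_wy := (h.apex_adj j y hy).resolve_left hwy
        red_wz := (h.apex_adj j z hz).resolve_left hwz
        blue_ws := hi, red_wt := hk }
  have hBlink := hB.cliqueFreeOn (s := R.neighborSet w)
  have hRlink := cliqueFreeOn_neighborSet hR w
  obtain rfl | rfl | rfl : l = i ∨ l = j ∨ l = k := by omega
  · exact .inr fun u hu v hv huv ↦ red_of_blue_of_blue hB huv (hi hu) (hi hv)
  · exact isMonochromaticOn_of_preconnected hBlink hRlink hjR hk (h.join hjk) (h.preconnected l)
      (h.odd k)
  · exact isMonochromaticOn_of_preconnected hBlink hRlink hk hjR (h.join hjk.symm)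
      (h.preconnected l) (h.odd j)

end IsOddTripleJoin

lemma cliqueFree_fromEdgeSet {G : SimpleGraph V} {E : Set (Sym2 V)} {n : ℕ} (hE : E ⊆ G.edgeSet)
    (h : ¬ HasMonoNClique G E n) : (fromEdgeSet E).CliqueFree n := fun S hS ↦
  h ⟨S, hS.mono (by simpa using fromEdgeSet_mono hE),
    fun _ hx _ hy hxy ↦ ((fromEdgeSet_adj E).1 (hS.isClique hx hy hxy)).1⟩

theorem lemma_2_5_general {G : SimpleGraph V} {w : V} {s : Fin 3 → Set V}
    (hG : IsOddTripleJoin G w s) {E1 E2 : Set (Sym2 V)} (hcov : E1 ∪ E2 = G.edgeSet)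
    (hnotmono : ∃ i, ¬ (G.edgeSet ∩ (s i).sym2 ⊆ E1 ∨ G.edgeSet ∩ (s i).sym2 ⊆ E2)) :
    HasMonoNClique G E1 3 ∨ HasMonoNClique G E2 4 := by
  by_contra! ⟨hblue, hred⟩
  have hB := cliqueFree_fromEdgeSet (hcov ▸ Set.subset_union_left) hblue
  have hR := cliqueFree_fromEdgeSet (hcov ▸ Set.subset_union_right) hred
  obtain ⟨i, hi⟩ := hnotmono
  obtain rfl : fromEdgeSet E1 ⊔ fromEdgeSet E2 = G := by
    rw [← fromEdgeSet_union, hcov, fromEdgeSet_edgeSet]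
  have inter_subset {E : Set (Sym2 V)} (h : ∀ u ∈ s i, ∀ v ∈ s i,
      (fromEdgeSet E1 ⊔ fromEdgeSet E2).Adj u v → (fromEdgeSet E).Adj u v) :
      (fromEdgeSet E1 ⊔ fromEdgeSet E2).edgeSet ∩ (s i).sym2 ⊆ E := by
    rintro ⟨u, v⟩ ⟨huv, hu, hv⟩
    exact ((fromEdgeSet_adj E).1 (h u hu v hv huv)).1
  exact hi ((hG.isMonochromaticOn hB hR i).imp inter_subset inter_subset)

lemma cycleGraph_five_not_isBipartite : ¬ (cycleGraph 5).IsBipartite := fun h ↦ by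
  have := chromaticNumber_cycleGraph_of_odd 5 (by decide) (by decide)
  rw [← chromaticNumber_le_two_iff_isBipartite, this] at h
  exact absurd h (by decide)

lemma exists_embedding_range_eq_cycVerts (i : Fin 3) :
    ∃ f : cycleGraph 5 ↪g G16, Set.range f = cycVerts i := by
  fin_cases i
  exacts [⟨⟨⟨ι1, fun _ _ h ↦ by simpa [ι1] using h⟩, Iff.rfl⟩, rfl⟩,
    ⟨⟨⟨ι2, fun _ _ h ↦ by simpa [ι2] using h⟩, Iff.rfl⟩, rfl⟩,
    ⟨⟨⟨ι3, fun _ _ h ↦ by simpa [ι3] using h⟩, Iff.rfl⟩, rfl⟩]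

lemma cycEdges_subset (i : Fin 3) : cycEdges i ⊆ G16.edgeSet ∩ (cycVerts i).sym2 := by
  fin_cases i <;>
  · rintro _ ⟨⟨u, v⟩, huv, rfl⟩
    exact ⟨huv, Set.mem_range_self u, Set.mem_range_self v⟩

lemma isOddTripleJoin_G16 : IsOddTripleJoin G16 (Sum.inl 0) cycVerts where
  apex_adj i v hv := by fin_cases i <;> obtain ⟨a, rfl⟩ := hv <;> trivial
  join i j hij u hu v hv := by
    fin_cases i <;> fin_cases j <;> first
      | exact absurd rfl hij
      | obtain ⟨a, rfl⟩ := hu; obtain ⟨b, rfl⟩ := hv; trivial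
  preconnected i := by
    obtain ⟨f, hf⟩ := exists_embedding_range_eq_cycVerts i
    exact hf ▸ f.isoInduceRange.preconnected_iff.1 cycleGraph_preconnected
  odd i := by
    obtain ⟨f, hf⟩ := exists_embedding_range_eq_cycVerts i
    exact hf ▸ fun h ↦ cycleGraph_five_not_isBipartite (h.of_hom f.isoInduceRange.toHom)

/-- **Lemma 2.5.** Let `G = K₁ + C₅⁽¹⁾ + C₅⁽²⁾ + C₅⁽³⁾` and let `E(G) = E₁ ∪ E₂` be a
blue-red coloring in which some of the three 5-cycles is not monochromatic.
Then the coloring is not `(3,4)`-free: there is a blue 3-clique or a red 4-clique. -/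
theorem lemma_2_5 (E1 E2 : Set (Sym2 V16)) (hcol : IsBRColoring G16 E1 E2)
    (hnotmono : ∃ i : Fin 3, ¬ (cycEdges i ⊆ E1 ∨ cycEdges i ⊆ E2)) :
    HasMonoNClique G16 E1 3 ∨ HasMonoNClique G16 E2 4 :=
  lemma_2_5_general isOddTripleJoin_G16 hcol.1 <| hnotmono.imp fun i ↦
    mt (.imp (cycEdges_subset i).trans (cycEdges_subset i).trans)
end

section
/- Let G = K₄ + C₅⁽¹⁾ + C₅⁽²⁾ + C₅⁽³⁾ + C₅⁽⁴⁾ be the join of a complete graph on 4 vertices with four disjoint copies of the 5-cycle. Then G → (3,5), i.e., every blue-red coloring of the edges of G contains either a blue 3-clique or a red 5-clique. -/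
open SimpleGraph

/-- The vertex set of `K₄ + C₅ + C₅ + C₅ + C₅`. -/
abbrev V24 : Type := Fin 4 ⊕ (Fin 5 ⊕ (Fin 5 ⊕ (Fin 5 ⊕ Fin 5)))

/-- The graph `K₄ + C₅⁽¹⁾ + C₅⁽²⁾ + C₅⁽³⁾ + C₅⁽⁴⁾`. -/
def G24 : SimpleGraph V24 :=
  graphJoin (⊤ : SimpleGraph (Fin 4))
    (graphJoin (cycleGraph 5)
      (graphJoin (cycleGraph 5) (graphJoin (cycleGraph 5) (cycleGraph 5))))

/-!
Write `(k, m) → q` when every blue-red colouring of the join of `K_k` with `m` five-cycles has a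
blue triangle or a red `q`-clique. Suppose a colouring has neither, and let `v` be a vertex of
`K_k`. The blue neighbourhood of `v` spans only red edges, so it contains no `q`-clique at all; the
red neighbourhood has no red `(q - 1)`-clique, so it contains no join `(k', m')` with
`(k', m') → q - 1`. Each five-cycle meets the two neighbourhoods in one of four patterns, and these
two constraints leave few possibilities for the patterns around `v`. They are refuted one after the
other for `(3, 0) → 2`, `(6, 0) → 3`, `(3, 1) → 3`, `(9, 0) → 4`, `(4, 2) → 4`, `(1, 3) → 4` and
finally `(4, 4) → 5`, where each vertex of `K₄` must be red to the rest of `K₄` and to exactly two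
five-cycles, and blue to the other two. The case `(1, 3) → 4` is the hard one: it rests on parity
arguments around the five-cycles themselves.
-/

namespace FiveCycleJoin

section OddCycle

variable {A : Type*} [AddGroup A] {p q : A → Prop}

theorem exists_iff_add (hA : Odd (Nat.card A)) (g : A) (p : A → Prop) :
    ∃ a, p a ↔ p (a + g) := by
  by_contra! h
  have alternate (n : ℕ) : p (n • g) ↔ (Even n ↔ p 0) := by
    induction n with
    | zero => simp
    | succ n ih =>
      have := h (n • g)
      rw [succ_nsmul, Nat.even_add_one]
      tauto
  have return_zero := alternate (Nat.card A)
  rw [card_nsmul_eq_zero'] at return_zero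
  have := Nat.not_even_iff_odd.2 hA
  tauto

theorem exists_and_add_or_exists_and_add (hA : Odd (Nat.card A)) (g : A)
    (h : ∀ a, p a ∨ q a) : (∃ a, p a ∧ p (a + g)) ∨ ∃ a, q a ∧ q (a + g) := by
  obtain ⟨a, ha⟩ := exists_iff_add hA g p
  by_cases pa : p a
  · exact .inl ⟨a, pa, ha.1 pa⟩
  · exact .inr ⟨a, (h a).resolve_left pa, (h _).resolve_left (mt ha.2 pa)⟩

theorem exists_and_add_of_forall_or_add (hA : Odd (Nat.card A)) (g : A)
    (h : ∀ a, p a ∨ p (a + g)) : ∃ a, p a ∧ p (a + g) := by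
  obtain ⟨a, ha⟩ := exists_iff_add hA g p
  have := h a
  exact ⟨a, by tauto, by tauto⟩

theorem exists_not_and_not_add (hA : Odd (Nat.card A)) (g : A)
    (h : ∀ a, ¬(p a ∧ p (a + g))) : ∃ a, ¬p a ∧ ¬p (a + g) :=
  exists_and_add_of_forall_or_add hA g fun a => not_and_or.1 (h a)

theorem exists_and_of_forall_or_add (hA : Odd (Nat.card A)) (g : A)
    (hp : ∀ a, p a ∨ p (a + g)) (hq : ∀ a, q a ∨ q (a + g)) : ∃ a, p a ∧ q a := by
  obtain ⟨a, ha, ha'⟩ := exists_and_add_of_forall_or_add hA g hp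
  exact (hq a).elim (fun h => ⟨a, ha, h⟩) fun h => ⟨_, ha', h⟩

theorem exists_not_and_not (hA : Odd (Nat.card A)) (g : A)
    (hp : ∀ a, ¬(p a ∧ p (a + g))) (hq : ∀ a, ¬(q a ∧ q (a + g))) : ∃ a, ¬p a ∧ ¬q a :=
  exists_and_of_forall_or_add hA g (fun a => not_and_or.1 (hp a)) fun a => not_and_or.1 (hq a)

end OddCycle

section Pentagon

theorem odd_card_fin_five : Odd (Nat.card (Fin 5)) := by
  rw [Nat.card_fin]
  decide

theorem forall_of_forall_imp_add_one {p : Fin 5 → Prop} (h : ∀ l, p l → p (l + 1)) {k : Fin 5}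
    (hk : p k) (l : Fin 5) : p l := by
  have reach (n : ℕ) : p (k + n • (1 : Fin 5)) := by
    induction n with
    | zero => simpa using hk
    | succ n ih => simpa only [succ_nsmul, add_assoc] using h _ ih
  have arrive : ∀ k l : Fin 5, k + (l - k).val • 1 = l := by decide
  exact arrive k l ▸ reach _

variable {p q : Fin 5 → Prop}

/- A counterexample would let every vertex outside `p` and `q` be recoloured, leaving a proper
colouring of an odd cycle with two colours. -/
theorem exists_neither_between (hp : ∀ l, ¬(p l ∧ p (l + 1))) (hq : ∀ l, ¬(q l ∧ q (l + 1)))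
    (hpq : ∀ l, ¬(p l ∧ q l)) (cover : ∀ l, p l ∨ q l ∨ p (l + 1) ∨ q (l + 1)) :
    ∃ l, (¬p (l + 1) ∧ ¬q (l + 1)) ∧ (p l ∧ ¬p (l + 2) ∨ q l ∧ ¬q (l + 2)) := by
  by_contra! h
  obtain ⟨l, hl⟩ := exists_iff_add odd_card_fin_five 1
    fun l => p l ∨ (¬p l ∧ ¬q l ∧ q (l + 1))
  have shift : ∀ l : Fin 5, l + 4 + 1 = l ∧ l + 4 + 2 = l + 1 ∧ l + 1 + 1 = l + 2 := by decide
  grind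

end Pentagon

section Alternation

variable {X Y : Type*} {P : Fin 5 → Set X} {Q : Fin 5 → Set Y}

theorem subset_add_four_of_inter_nonempty (hP : ∀ k, Disjoint (P k) (P (k + 1)))
    (hPQ : ∀ k, ∀ x ∈ P k, ∀ y ∈ Q k, x ∈ P (k + 2) ∨ y ∈ Q (k + 2)) {k : Fin 5}
    (hk : (P k ∩ P (k + 2)).Nonempty) : Q (k + 2) ⊆ Q (k + 2 + 2) := by
  obtain ⟨x, hx, hx'⟩ := hk
  have shift : ∀ k : Fin 5, k + 2 + 2 + 1 = k := by decide
  exact fun y hy => (hPQ _ x hx' y hy).resolve_left fun h =>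
    (shift k ▸ hP (k + 2 + 2)).notMem_of_mem_left h hx

theorem not_inter_add_two_nonempty (hP : ∀ k, Disjoint (P k) (P (k + 1)))
    (hQ : ∀ k, Disjoint (Q k) (Q (k + 1))) (hP₀ : ∀ k, (P k).Nonempty)
    (hQ₀ : ∀ k, (Q k).Nonempty)
    (hPQ : ∀ k, ∀ x ∈ P k, ∀ y ∈ Q k, x ∈ P (k + 2) ∨ y ∈ Q (k + 2)) (k : Fin 5) :
    ¬(P k ∩ P (k + 2)).Nonempty := by
  intro h₀
  have hQP : ∀ k, ∀ y ∈ Q k, ∀ x ∈ P k, y ∈ Q (k + 2) ∨ x ∈ P (k + 2) :=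
    fun k y hy x hx => (hPQ k x hx y hy).symm
  have stepP {k} (h : (P k ∩ P (k + 2)).Nonempty) : (Q (k + 2) ∩ Q (k + 2 + 2)).Nonempty :=
    (hQ₀ _).mono (Set.subset_inter subset_rfl (subset_add_four_of_inter_nonempty hP hPQ h))
  have stepQ {k} (h : (Q k ∩ Q (k + 2)).Nonempty) : (P (k + 2) ∩ P (k + 2 + 2)).Nonempty :=
    (hP₀ _).mono (Set.subset_inter subset_rfl (subset_add_four_of_inter_nonempty hQ hQP h))
  have shift : ∀ k : Fin 5, k + 2 + 2 + 2 + 2 + 2 = k ∧ k + 2 + 2 + 1 = k := by decide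
  have h₄ := stepQ (stepP (stepQ (stepP h₀)))
  have hQ₁ := subset_add_four_of_inter_nonempty hP hPQ h₄
  rw [(shift k).1] at hQ₁
  have hQ₂ := subset_add_four_of_inter_nonempty hP hPQ h₀
  obtain ⟨y, hy⟩ := hQ₀ k
  exact ((shift k).2 ▸ hQ (k + 2 + 2)).notMem_of_mem_left (hQ₂ (hQ₁ hy)) hy

/- Once some `x` lies in `P k ∩ P (k + 2)`, it misses `P (k + 4)`, so all of `Q (k + 2)` lies in
`Q (k + 4)`; the roles of `P` and `Q` then alternate around a cycle of odd length. -/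
theorem exists_notMem_and_notMem_add_two (hP : ∀ k, Disjoint (P k) (P (k + 1)))
    (hQ : ∀ k, Disjoint (Q k) (Q (k + 1))) (hP₀ : ∀ k, (P k).Nonempty)
    (hQ₀ : ∀ k, (Q k).Nonempty) :
    ∃ k, ∃ x ∈ P k, ∃ y ∈ Q k, x ∉ P (k + 2) ∧ y ∉ Q (k + 2) := by
  by_contra! h
  have hPQ (k) (x) (hx : x ∈ P k) (y) (hy : y ∈ Q k) : x ∈ P (k + 2) ∨ y ∈ Q (k + 2) :=
    or_iff_not_imp_left.2 (h k x hx y hy)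
  obtain ⟨x, hx⟩ := hP₀ 0
  obtain ⟨y, hy⟩ := hQ₀ 0
  rcases hPQ 0 x hx y hy with hx' | hy'
  · exact not_inter_add_two_nonempty hP hQ hP₀ hQ₀ hPQ 0 ⟨x, hx, hx'⟩
  · exact not_inter_add_two_nonempty hQ hP hQ₀ hP₀
      (fun k y hy x hx => (hPQ k x hx y hy).symm) 0 ⟨y, hy, hy'⟩

end Alternation

section Clique

variable {V : Type*} {G B R : SimpleGraph V} {a b c d e x y z : V} {n : ℕ}

theorem not_cliqueFree_of_pairwise {f : Fin n → V} (h : Pairwise fun i j => G.Adj (f i) (f j)) :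
    ¬G.CliqueFree n :=
  let φ : (⊤ : SimpleGraph (Fin n)) →g G := ⟨f, fun hij => h hij⟩
  (not_cliqueFree_iff_top_isContained n).2 ⟨φ, φ.injective_of_top_hom⟩

theorem not_cliqueFree_three (ab : G.Adj a b) (ac : G.Adj a c) (bc : G.Adj b c) :
    ¬G.CliqueFree 3 := by
  classical exact (is3Clique_triple_iff.2 ⟨ab, ac, bc⟩).not_cliqueFree

theorem not_cliqueFree_four (ab : G.Adj a b) (ac : G.Adj a c) (ad : G.Adj a d) (bc : G.Adj b c)
    (bd : G.Adj b d) (cd : G.Adj c d) : ¬G.CliqueFree 4 := by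
  classical
  exact ((is3Clique_triple_iff.2 ⟨bc, bd, cd⟩).insert (a := a)
    (by simp [ab, ac, ad])).not_cliqueFree

theorem not_cliqueFree_five (ab : G.Adj a b) (ac : G.Adj a c) (ad : G.Adj a d) (ae : G.Adj a e)
    (bc : G.Adj b c) (bd : G.Adj b d) (be : G.Adj b e) (cd : G.Adj c d) (ce : G.Adj c e)
    (de : G.Adj d e) : ¬G.CliqueFree 5 := by
  classical
  exact (((is3Clique_triple_iff.2 ⟨cd, ce, de⟩).insert (a := b)
    (by simp [bc, bd, be])).insert (a := a) (by simp [ab, ac, ad, ae])).not_cliqueFree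

theorem adj_right_of_path (hB : B.CliqueFree 3) (xy : B.Adj x y) (yz : B.Adj y z)
    (xz : (B ⊔ R).Adj x z) : R.Adj x z :=
  xz.resolve_left fun h => not_cliqueFree_three xy h yz hB

theorem exists_adj_left_between (hR : R.CliqueFree 4) (ab : R.Adj a b) (cd : R.Adj c d)
    (ac : (B ⊔ R).Adj a c) (ad : (B ⊔ R).Adj a d) (bc : (B ⊔ R).Adj b c)
    (bd : (B ⊔ R).Adj b d) : B.Adj a c ∨ B.Adj a d ∨ B.Adj b c ∨ B.Adj b d := by
  by_contra! h
  exact not_cliqueFree_four ab (ac.resolve_left h.1) (ad.resolve_left h.2.1)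
    (bc.resolve_left h.2.2.1) (bd.resolve_left h.2.2.2) cd hR

end Clique

section Join

variable {V W ι μ : Type*} {G H : SimpleGraph V} {S T : Set V} {k m k' m' : ℕ}

/-- `γ` is a closed walk `γ 0, …, γ 4` of `G`, the shape in which five-cycles are handled here. -/
def IsPentagon (G : SimpleGraph V) (γ : Fin 5 → V) : Prop :=
  ∀ l, G.Adj (γ l) (γ (l + 1))

/-- `κ` spans a clique and each `γ j` a pentagon of `G`, and all these pieces are completely
joined to one another: a copy of the join of `K_ι` with `μ` five-cycles. -/
structure IsJoin (G : SimpleGraph V) (κ : ι → V) (γ : μ → Fin 5 → V) : Prop where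
  clique : Pairwise fun i i' => G.Adj (κ i) (κ i')
  cone : ∀ i j l, G.Adj (κ i) (γ j l)
  pentagon : ∀ j, IsPentagon G (γ j)
  cross : Pairwise fun j j' => ∀ l l', G.Adj (γ j l) (γ j' l')

/-- `G` contains a copy of `K_k + C₅ + ⋯ + C₅`, with `m` five-cycles, whose vertices lie in `S`. -/
def HasJoin (G : SimpleGraph V) (S : Set V) (k m : ℕ) : Prop :=
  ∃ (κ : Fin k → V) (γ : Fin m → Fin 5 → V),
    IsJoin G κ γ ∧ (∀ i, κ i ∈ S) ∧ ∀ j l, γ j l ∈ S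

theorem IsJoin.mono_adj {κ : ι → V} {γ : μ → Fin 5 → V} (h : IsJoin G κ γ)
    (hκ : ∀ i, κ i ∈ S) (hγ : ∀ j l, γ j l ∈ S)
    (hGH : ∀ x ∈ S, ∀ y ∈ S, G.Adj x y → H.Adj x y) : IsJoin H κ γ where
  clique _ _ hij := hGH _ (hκ _) _ (hκ _) (h.clique hij)
  cone i j l := hGH _ (hκ i) _ (hγ j l) (h.cone i j l)
  pentagon j l := hGH _ (hγ j _) _ (hγ j _) (h.pentagon j l)
  cross _ _ hij l l' := hGH _ (hγ _ l) _ (hγ _ l') (h.cross hij l l')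

theorem IsJoin.hasJoin [Fintype ι] [Fintype μ] {κ : ι → V} {γ : μ → Fin 5 → V}
    (h : IsJoin G κ γ) (hκ : ∀ i, κ i ∈ S) (hγ : ∀ j l, γ j l ∈ S)
    (hk : k ≤ Fintype.card ι) (hm : m ≤ Fintype.card μ) : HasJoin G S k m := by
  obtain ⟨e⟩ : Nonempty (Fin k ↪ ι) := Function.Embedding.nonempty_of_card_le (by simpa)
  obtain ⟨f⟩ : Nonempty (Fin m ↪ μ) := Function.Embedding.nonempty_of_card_le (by simpa)
  exact ⟨κ ∘ e, γ ∘ f,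
    ⟨h.clique.comp_of_injective e.injective, fun i j => h.cone (e i) (f j),
      fun j => h.pentagon (f j), h.cross.comp_of_injective f.injective⟩,
    fun i => hκ (e i), fun j => hγ (f j)⟩

namespace HasJoin

theorem zero : HasJoin G S 0 0 :=
  ⟨Fin.elim0, Fin.elim0, ⟨fun i => i.elim0, fun i => i.elim0, fun i => i.elim0,
    fun i => i.elim0⟩, fun i => i.elim0, fun i => i.elim0⟩

theorem of_mem {v : V} (hv : v ∈ S) : HasJoin G S 1 0 :=
  ⟨fun _ => v, Fin.elim0, ⟨fun i j hij => (hij (Subsingleton.elim i j)).elim,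
    fun _ j => j.elim0, fun j => j.elim0, fun j => j.elim0⟩, fun _ => hv, fun j => j.elim0⟩

theorem of_isPentagon {γ : Fin 5 → V} (h : IsPentagon G γ) (hγ : ∀ l, γ l ∈ S) :
    HasJoin G S 0 1 :=
  ⟨Fin.elim0, fun _ => γ, ⟨fun i => i.elim0, fun i => i.elim0, fun _ => h,
    fun i j hij => (hij (Subsingleton.elim i j)).elim⟩, fun i => i.elim0, fun _ => hγ⟩

theorem mono_adj (h : HasJoin G S k m) (hGH : ∀ x ∈ S, ∀ y ∈ S, G.Adj x y → H.Adj x y) :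
    HasJoin H S k m :=
  let ⟨κ, γ, hj, hκ, hγ⟩ := h
  ⟨κ, γ, hj.mono_adj hκ hγ hGH, hκ, hγ⟩

theorem mono_set (h : HasJoin G S k m) (hST : S ⊆ T) : HasJoin G T k m :=
  let ⟨κ, γ, hj, hκ, hγ⟩ := h
  ⟨κ, γ, hj, fun i => hST (hκ i), fun j l => hST (hγ j l)⟩

theorem induce (h : HasJoin G S k m) : HasJoin (G.induce S) Set.univ k m :=
  let ⟨κ, γ, hj, hκ, hγ⟩ := h
  ⟨fun i => ⟨κ i, hκ i⟩, fun j l => ⟨γ j l, hγ j l⟩,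
    ⟨hj.clique, hj.cone, hj.pentagon, hj.cross⟩, fun _ => trivial, fun _ _ => trivial⟩

theorem map {H : SimpleGraph W} (f : G →g H) (h : HasJoin G S k m) : HasJoin H (f '' S) k m :=
  let ⟨κ, γ, hj, hκ, hγ⟩ := h
  ⟨f ∘ κ, fun j => f ∘ γ j,
    ⟨fun _ _ hij => f.map_adj (hj.clique hij), fun i j l => f.map_adj (hj.cone i j l),
      fun j l => f.map_adj (hj.pentagon j l), fun _ _ hij l l' => f.map_adj (hj.cross hij l l')⟩,
    fun i => Set.mem_image_of_mem f (hκ i), fun j l => Set.mem_image_of_mem f (hγ j l)⟩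

theorem not_cliqueFree (h : HasJoin G S k m) : ¬G.CliqueFree k :=
  let ⟨_, _, hj, _⟩ := h
  not_cliqueFree_of_pairwise hj.clique

theorem iUnion [Fintype ι] {T : ι → Set V} {a z : ι → ℕ} (h : ∀ i, HasJoin G (T i) (a i) (z i))
    (hT : Pairwise fun i j => ∀ x ∈ T i, ∀ y ∈ T j, G.Adj x y) :
    HasJoin G (⋃ i, T i) (∑ i, a i) (∑ i, z i) := by
  choose κ γ hj hκ hγ using h
  have join : IsJoin G (fun s : Σ i, Fin (a i) => κ s.1 s.2)
      (fun s : Σ i, Fin (z i) => γ s.1 s.2) := by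
    refine ⟨?_, ?_, fun s => (hj s.1).pentagon s.2, ?_⟩
    · rintro ⟨i, s⟩ ⟨j, t⟩ hst
      obtain rfl | hij := eq_or_ne i j
      · exact (hj i).clique fun h => hst (congrArg (Sigma.mk i) h)
      · exact hT hij _ (hκ i s) _ (hκ j t)
    · rintro ⟨i, s⟩ ⟨j, t⟩ l
      obtain rfl | hij := eq_or_ne i j
      · exact (hj i).cone s t l
      · exact hT hij _ (hκ i s) _ (hγ j t l)
    · rintro ⟨i, s⟩ ⟨j, t⟩ hst l l'
      obtain rfl | hij := eq_or_ne i j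
      · exact (hj i).cross (fun h => hst (congrArg (Sigma.mk i) h)) l l'
      · exact hT hij _ (hγ i s l) _ (hγ j t l')
  exact join.hasJoin (fun s => Set.mem_iUnion_of_mem _ (hκ s.1 s.2))
    (fun s l => Set.mem_iUnion_of_mem _ (hγ s.1 s.2 l)) (by simp) (by simp)

theorem union (hS : HasJoin G S k m) (hT : HasJoin G T k' m')
    (hST : ∀ x ∈ S, ∀ y ∈ T, G.Adj x y) : HasJoin G (S ∪ T) (k + k') (m + m') := by
  have pieces : ∀ b : Bool, HasJoin G (cond b S T) (cond b k k') (cond b m m') :=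
    Bool.rec hT hS
  have joined : Pairwise fun b c : Bool => ∀ x ∈ cond b S T, ∀ y ∈ cond c S T, G.Adj x y := by
    rintro (_ | _) (_ | _) hbc
    · exact absurd rfl hbc
    · exact fun x hx y hy => (hST y hy x hx).symm
    · exact hST
    · exact absurd rfl hbc
  simpa only [← Set.union_eq_iUnion, Fintype.sum_bool, cond_true, cond_false] using
    iUnion pieces joined

theorem of_adj {v w : V} (hv : v ∈ S) (hw : w ∈ S) (h : G.Adj v w) : HasJoin G S 2 0 :=
  (union (of_mem (Set.mem_singleton v)) (of_mem (Set.mem_singleton w))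
    (by rintro _ rfl _ rfl; exact h)).mono_set (by simp [Set.insert_subset_iff, hv, hw])

end HasJoin

theorem IsJoin.hasJoin_sum [Fintype μ] {κ : ι → V} {γ : μ → Fin 5 → V} (h : IsJoin G κ γ)
    {s : Finset ι} (hs : ∀ i ∈ s, κ i ∈ T) {a z : μ → ℕ}
    (hγ : ∀ j, HasJoin G (T ∩ Set.range (γ j)) (a j) (z j)) :
    HasJoin G T (s.card + ∑ j, a j) (∑ j, z j) := by
  have clique : HasJoin G (⋃ i : s, {κ i}) (∑ _i : s, 1) (∑ _i : s, 0) :=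
    .iUnion (fun i => .of_mem rfl) fun i j hij => by
      rintro _ rfl _ rfl
      exact h.clique (Subtype.coe_injective.ne hij)
  have pentagons : HasJoin G (⋃ j, T ∩ Set.range (γ j)) (∑ j, a j) (∑ j, z j) :=
    .iUnion hγ fun j j' hj => by
      rintro _ ⟨-, l, rfl⟩ _ ⟨-, l', rfl⟩
      exact h.cross hj l l'
  have all := clique.union pentagons <| by
    simp only [Set.mem_iUnion]
    rintro _ ⟨i, rfl⟩ _ ⟨j, -, l, rfl⟩
    exact h.cone i j l
  simp only [Finset.sum_const, Finset.card_univ, Fintype.card_coe, smul_eq_mul, mul_one, mul_zero,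
    zero_add] at all
  refine all.mono_set (Set.union_subset (Set.iUnion_subset fun i => ?_)
    (Set.iUnion_subset fun j => Set.inter_subset_left))
  exact Set.singleton_subset_iff.2 (hs i i.2)

/- An edge of a pentagon serves as two clique vertices. -/
theorem HasJoin.trade (h : HasJoin G S k m) (hm : m' ≤ m) (hk : k' + 2 * m' ≤ k + 2 * m) :
    HasJoin G S k' m' := by
  classical
  obtain ⟨κ, γ, hj, hκ, hγ⟩ := h
  obtain ⟨t, -, ht⟩ := Finset.exists_subset_card_eq (s := (.univ : Finset (Fin m))) (by simpa)
  have pieces (j) : HasJoin G (S ∩ Set.range (γ j)) (if j ∈ t then 0 else 2)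
      (if j ∈ t then 1 else 0) := by
    have mem (l) : γ j l ∈ S ∩ Set.range (γ j) := ⟨hγ j l, l, rfl⟩
    split_ifs
    · exact .of_isPentagon (hj.pentagon j) mem
    · exact .of_adj (mem 0) (mem 1) (hj.pentagon j 0)
  obtain ⟨κ, γ, hj, hκ, hγ⟩ := hj.hasJoin_sum (s := .univ) (fun i _ => hκ i) pieces
  refine hj.hasJoin hκ hγ ?_ ?_
  · have : tᶜ.card = m - m' := by rw [Finset.card_compl, ht, Fintype.card_fin]
    simp [Finset.sum_ite, ← Finset.compl_filter, this]
    omega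
  · simp [ht]

end Join

section Pattern

variable {V μ : Type*} {G : SimpleGraph V} {S T : Set V} {γ : Fin 5 → V}

/-- How a pentagon may meet the blue and the red neighbourhood of a vertex: it is entirely red; it
has a blue vertex followed by two red ones; it has a blue edge and a red vertex; it is entirely
blue. -/
inductive Pattern
  | red | redPath | blueEdge | blue
  deriving DecidableEq

namespace Pattern

/-- `t.Fits S T γ`: the pentagon `γ` has the pattern `t` relative to the blue neighbourhood `S` and
the red neighbourhood `T` of some vertex. -/
def Fits (S T : Set V) (γ : Fin 5 → V) : Pattern → Prop
  | red => ∀ l, γ l ∈ T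
  | redPath => ∃ l, γ l ∈ S ∧ γ (l + 1) ∈ T ∧ γ (l + 2) ∈ T
  | blueEdge => (∃ l, γ l ∈ S ∧ γ (l + 1) ∈ S) ∧ ∃ l, γ l ∈ T
  | blue => ∀ l, γ l ∈ S

/-- The size of a clique that a pentagon of this pattern has in the blue neighbourhood. -/
def blueClique : Pattern → ℕ
  | red => 0
  | redPath => 1
  | blueEdge => 2
  | blue => 2

/-- The size of a clique that a pentagon of this pattern, unless it is entirely red, has in the red
neighbourhood. -/
def redClique : Pattern → ℕ
  | red => 0
  | redPath => 2
  | blueEdge => 1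
  | blue => 0

/-- The number (zero or one) of whole pentagons in the red neighbourhood. -/
def redCycles : Pattern → ℕ
  | red => 1
  | redPath => 0
  | blueEdge => 0
  | blue => 0

theorem exists_fits (h : ∀ l, γ l ∈ S ∨ γ l ∈ T) : ∃ t : Pattern, t.Fits S T γ := by
  by_cases allRed : ∀ l, γ l ∈ T
  · exact ⟨red, allRed⟩
  by_cases allBlue : ∀ l, γ l ∈ S
  · exact ⟨blue, allBlue⟩
  by_cases edge : ∃ l, γ l ∈ S ∧ γ (l + 1) ∈ S
  · exact ⟨blueEdge, edge, (not_forall.1 allBlue).imp fun l => (h l).resolve_left⟩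
  obtain ⟨l, hl⟩ := not_forall.1 allRed
  have blue_l := (h l).resolve_right hl
  have next {l} (hl : γ l ∈ S) : γ (l + 1) ∈ T :=
    (h _).resolve_left fun hl' => edge ⟨l, hl, hl'⟩
  have shift : ∀ l : Fin 5, l + 2 + 2 + 1 = l := by decide
  rcases h (l + 2) with hl' | hl'
  · exact ⟨redPath, l + 2, hl', next hl', (h _).resolve_left fun h₄ =>
      edge ⟨l + 2 + 2, h₄, (shift l).symm ▸ blue_l⟩⟩
  · exact ⟨redPath, l, blue_l, next blue_l, hl'⟩

theorem Fits.hasJoin_blue {t : Pattern} (h : t.Fits S T γ) (hγ : IsPentagon G γ) :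
    HasJoin G (S ∩ Set.range γ) t.blueClique 0 := by
  have mem {l} (hl : γ l ∈ S) : γ l ∈ S ∩ Set.range γ := ⟨hl, l, rfl⟩
  cases t with
  | red => exact .zero
  | redPath =>
    obtain ⟨l, hl, -⟩ := h
    exact .of_mem (mem hl)
  | blueEdge =>
    obtain ⟨⟨l, hl, hl'⟩, -⟩ := h
    exact .of_adj (mem hl) (mem hl') (hγ l)
  | blue => exact .of_adj (mem (h 0)) (mem (h 1)) (hγ 0)

theorem Fits.hasJoin_red {t : Pattern} (h : t.Fits S T γ) (hγ : IsPentagon G γ) :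
    HasJoin G (T ∩ Set.range γ) t.redClique t.redCycles := by
  have mem {l} (hl : γ l ∈ T) : γ l ∈ T ∩ Set.range γ := ⟨hl, l, rfl⟩
  cases t with
  | red => exact .of_isPentagon hγ fun l => mem (h l)
  | redPath =>
    obtain ⟨l, -, h₁, h₂⟩ := h
    have shift : ∀ l : Fin 5, l + 1 + 1 = l + 2 := by decide
    exact .of_adj (mem h₁) (mem h₂) (shift l ▸ hγ (l + 1))
  | blueEdge =>
    obtain ⟨-, l, hl⟩ := h
    exact .of_mem (mem hl)
  | blue => exact .zero

/-- The number of pentagons of pattern `t` in a family with patterns `τ`. -/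
def count [Fintype μ] (τ : μ → Pattern) (t : Pattern) : ℕ :=
  (Finset.univ.filter fun j => τ j = t).card

theorem sum_comp_eq_sum_count [Fintype μ] (τ : μ → Pattern) (f : Pattern → ℕ) :
    ∑ j, f (τ j) = count τ red * f red + count τ redPath * f redPath +
      count τ blueEdge * f blueEdge + count τ blue * f blue := by
  simp only [count, Finset.card_filter, Finset.sum_mul, ← Finset.sum_add_distrib]
  refine Finset.sum_congr rfl fun j _ => ?_
  cases τ j <;> simp

theorem count_pos [Fintype μ] {τ : μ → Pattern} {t : Pattern} :
    0 < count τ t ↔ ∃ j, τ j = t := by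
  simp [count, Finset.card_pos, Finset.filter_nonempty_iff]

theorem exists_ne_of_one_lt_count [Fintype μ] {τ : μ → Pattern} {t : Pattern}
    (h : 1 < count τ t) : ∃ i j, i ≠ j ∧ τ i = t ∧ τ j = t := by
  obtain ⟨i, hi, j, hj, hij⟩ := Finset.one_lt_card.1 h
  exact ⟨i, j, hij, (Finset.mem_filter.1 hi).2, (Finset.mem_filter.1 hj).2⟩

end Pattern

end Pattern

section JoinArrows

/-- `JoinArrows k m q` is the arrow relation `K_k + C₅ + ⋯ + C₅ → (3, q)`, with `m` five-cycles,
for blue-red colourings given by the graph `B` of blue edges and the graph `R` of red edges. -/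
def JoinArrows.{u} (k m q : ℕ) : Prop :=
  ∀ {V : Type u} {B R : SimpleGraph V},
    B.CliqueFree 3 → HasJoin (B ⊔ R) Set.univ k m → ¬R.CliqueFree q

universe u

variable {V : Type u} {ι μ : Type*} {B R : SimpleGraph V} {k m k' m' q : ℕ}

theorem JoinArrows.trade (h : JoinArrows.{u} k m q) (hm : m ≤ m')
    (hk : k + 2 * m ≤ k' + 2 * m') : JoinArrows.{u} k' m' q :=
  fun hB hj => h hB (hj.trade hm hk)

theorem HasJoin.lt_of_blue (hB : B.CliqueFree 3) (hR : R.CliqueFree q) {v : V}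
    (h : HasJoin (B ⊔ R) (B.neighborSet v) k m) : k < q := by
  by_contra! hq
  have red : HasJoin R (B.neighborSet v) k m := h.mono_adj fun _ hx _ hy hxy =>
    adj_right_of_path hB hx.symm hy hxy
  exact red.not_cliqueFree (hR.mono hq)

theorem JoinArrows.not_hasJoin_red (h : JoinArrows.{u} k m q) (hB : B.CliqueFree 3)
    (hR : R.CliqueFree (q + 1)) {v : V} : ¬HasJoin (B ⊔ R) (R.neighborSet v) k m := fun hj =>
  h (hB.comap ⟨(Embedding.induce _).toCopy⟩) hj.induce <| (cliqueFree_induce_iff R _ q).2 <| by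
    simpa using CliqueFreeOn.of_succ R ((cliqueFreeOn_univ R).2 hR) (Set.mem_univ v)

section Neighborhoods

open Pattern

variable [Fintype ι] [Fintype μ] {κ : ι → V} {γ : μ → Fin 5 → V} [DecidableRel (B.comap κ).Adj]

theorem IsJoin.degree_add_count_le (h : IsJoin (B ⊔ R) κ γ) (hB : B.CliqueFree 3)
    (hR : R.CliqueFree (q + 1)) (i : ι) {τ : μ → Pattern}
    (hτ : ∀ j, (τ j).Fits (B.neighborSet (κ i)) (R.neighborSet (κ i)) (γ j)) :
    (B.comap κ).degree i + count τ redPath + 2 * count τ blueEdge + 2 * count τ blue ≤ q := by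
  have blue := h.hasJoin_sum (s := (B.comap κ).neighborFinset i) (T := B.neighborSet (κ i))
    (fun i' hi' => by simpa using hi') fun j => (hτ j).hasJoin_blue (h.pentagon j)
  have := blue.lt_of_blue hB hR
  rw [sum_comp_eq_sum_count τ blueClique, card_neighborFinset_eq_degree] at this
  simp only [blueClique] at this
  omega

theorem IsJoin.lt_of_joinArrows (h : IsJoin (B ⊔ R) κ γ) (hB : B.CliqueFree 3)
    (hR : R.CliqueFree (q + 1)) (i : ι) {τ : μ → Pattern}
    (hτ : ∀ j, (τ j).Fits (B.neighborSet (κ i)) (R.neighborSet (κ i)) (γ j))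
    (hkm : JoinArrows.{u} k m q) (hm : m ≤ count τ red) :
    2 * count τ red + 2 * count τ redPath + count τ blueEdge + Fintype.card ι <
      k + 2 * m + (B.comap κ).degree i + 1 := by
  classical
  have red := h.hasJoin_sum (s := ((B.comap κ).neighborFinset i)ᶜ.erase i)
    (T := R.neighborSet (κ i)) (fun i' hi' => by
      simp only [Finset.mem_erase, Finset.mem_compl, mem_neighborFinset, comap_adj] at hi'
      exact (h.clique hi'.1.symm).resolve_left hi'.2)
    fun j => (hτ j).hasJoin_red (h.pentagon j)
  have card : (((B.comap κ).neighborFinset i)ᶜ.erase i).card + (B.comap κ).degree i + 1 =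
      Fintype.card ι := by
    have := (B.comap κ).degree_lt_card_verts i
    rw [Finset.card_erase_of_mem (by simp), Finset.card_compl, card_neighborFinset_eq_degree]
    omega
  rw [sum_comp_eq_sum_count τ redClique, sum_comp_eq_sum_count τ redCycles] at red
  simp only [redClique, redCycles] at red
  by_contra! hle
  exact JoinArrows.not_hasJoin_red (hkm.trade (by omega) (by omega)) hB hR red

theorem IsJoin.exists_patterns (h : IsJoin (B ⊔ R) κ γ) (hB : B.CliqueFree 3)
    (hR : R.CliqueFree (q + 1)) (i : ι) :
    ∃ τ : μ → Pattern,
      (∀ j, (τ j).Fits (B.neighborSet (κ i)) (R.neighborSet (κ i)) (γ j)) ∧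
      count τ red + count τ redPath + count τ blueEdge + count τ blue = Fintype.card μ ∧
      (B.comap κ).degree i < Fintype.card ι ∧
      (B.comap κ).degree i + count τ redPath + 2 * count τ blueEdge + 2 * count τ blue ≤ q ∧
      ∀ k m, JoinArrows.{u} k m q → m ≤ count τ red →
        2 * count τ red + 2 * count τ redPath + count τ blueEdge + Fintype.card ι <
          k + 2 * m + (B.comap κ).degree i + 1 := by
  choose τ hτ using fun j => Pattern.exists_fits fun l => h.cone i j l
  have total := sum_comp_eq_sum_count τ fun _ => 1
  simp only [Finset.sum_const, Finset.card_univ, smul_eq_mul, mul_one] at total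
  exact ⟨τ, hτ, total.symm, (B.comap κ).degree_lt_card_verts i,
    h.degree_add_count_le hB hR i hτ, fun k m => h.lt_of_joinArrows hB hR i hτ⟩

end Neighborhoods

end JoinArrows

section SmallJoins

universe u

theorem joinArrows_three_zero_two : JoinArrows.{u} 3 0 2 := by
  intro V B R hB hj hR
  rw [cliqueFree_two.1 hR, sup_bot_eq] at hj
  exact hj.not_cliqueFree hB

theorem joinArrows_six_zero_three : JoinArrows.{u} 6 0 3 := by
  classical
  rintro V B R hB ⟨κ, γ, hj, -⟩ hR
  obtain ⟨τ, -, total, -, blue, red⟩ := hj.exists_patterns hB hR 0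
  have red₃ := red 3 0 joinArrows_three_zero_two
  simp only [Fintype.card_fin] at *
  omega

theorem eq_bot_or_eq_top_of_degree {V : Type*} [Fintype V] {H : SimpleGraph V}
    [DecidableRel H.Adj]
    (h : ∀ v, H.degree v = 0 ∨ H.degree v = Fintype.card V - 1) : H = ⊥ ∨ H = ⊤ := by
  classical
  refine or_iff_not_imp_left.2 fun hne => ?_
  have universal {a b} (hab : H.Adj a b) : H.IsUniversal a :=
    (H.degree_eq_card_sub_one a).1 <|
      (h a).resolve_left ((H.degree_pos_iff_exists_adj a).2 ⟨b, hab⟩).ne'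
  obtain ⟨a, b, hab⟩ := ne_bot_iff_exists_adj.1 hne
  refine eq_top_iff_forall_isUniversal.2 fun c => ?_
  obtain rfl | hca := eq_or_ne c a
  · exact universal hab
  · exact universal (universal hab hca.symm).symm

theorem joinArrows_three_one_three : JoinArrows.{u} 3 1 3 := by
  classical
  rintro V B R hB ⟨κ, γ, hj, -⟩ hR
  have degree (i) : (B.comap κ).degree i = 0 ∨
      (B.comap κ).degree i = Fintype.card (Fin 3) - 1 := by
    obtain ⟨τ, -, total, -, blue, red⟩ := hj.exists_patterns hB hR i
    have red₃ := red 3 0 joinArrows_three_zero_two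
    simp only [Fintype.card_fin] at *
    omega
  rcases eq_bot_or_eq_top_of_degree degree with h | h
  · refine not_cliqueFree_of_pairwise (f := κ) (fun i i' hne => (hj.clique hne).resolve_left ?_) hR
    exact fun hi => (h ▸ hi : (⊥ : SimpleGraph (Fin 3)).Adj i i')
  · refine not_cliqueFree_of_pairwise (f := κ) (fun i i' hne => ?_) hB
    exact (h ▸ hne : (B.comap κ).Adj i i')

theorem joinArrows_nine_zero_four : JoinArrows.{u} 9 0 4 := by
  classical
  rintro V B R hB ⟨κ, γ, hj, -⟩ hR
  have degree (i) : (B.comap κ).degree i = 3 := by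
    obtain ⟨τ, -, total, -, blue, red⟩ := hj.exists_patterns hB hR i
    have red₆ := red 6 0 joinArrows_six_zero_three
    simp only [Fintype.card_fin] at *
    omega
  have handshake := (B.comap κ).sum_degrees_eq_twice_card_edges
  simp only [degree, Finset.sum_const, Finset.card_univ, Fintype.card_fin, smul_eq_mul] at handshake
  omega

end SmallJoins

section FourTwo

universe u

variable {V : Type u} {B R : SimpleGraph V} {κ : Fin 4 → V} {γ : Fin 2 → Fin 5 → V}
  {δ : Fin 5 → V} {x y z : V}

theorem not_forall_blue_of_red_edge (hB : B.CliqueFree 3) (hR : R.CliqueFree 4)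
    (hδ : IsPentagon (B ⊔ R) δ) (xy : R.Adj x y) (xδ : ∀ l, R.Adj x (δ l))
    (yδ : ∃ l, R.Adj y (δ l) ∧ R.Adj y (δ (l + 1))) : ¬∀ l, B.Adj z (δ l) := by
  intro zδ
  obtain ⟨l, yl, yl'⟩ := yδ
  exact not_cliqueFree_four xy (xδ _) (xδ _) yl yl'
    (adj_right_of_path hB (zδ l).symm (zδ (l + 1)) (hδ l)) hR

theorem IsJoin.degree_eq_three_or [DecidableRel (B.comap κ).Adj] (hj : IsJoin (B ⊔ R) κ γ)
    (hB : B.CliqueFree 3) (hR : R.CliqueFree 4) (i : Fin 4) :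
    (B.comap κ).degree i = 3 ∨ ∃ o, (∀ o' ≠ o, ∀ l, B.Adj (κ i) (γ o' l)) ∧
      (∃ l, R.Adj (κ i) (γ o l) ∧ R.Adj (κ i) (γ o (l + 1))) ∧
      ((B.comap κ).degree i = 0 ∨
        (B.comap κ).degree i = 1 ∧ ∀ l, R.Adj (κ i) (γ o l)) := by
  obtain ⟨τ, fits, total, -, blue, red⟩ := hj.exists_patterns hB hR i
  have red₆ := red 6 0 joinArrows_six_zero_three
  have red₃ := red 3 1 joinArrows_three_one_three
  simp only [Fintype.card_fin] at *
  refine or_iff_not_imp_left.2 fun hdeg => ?_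
  obtain ⟨j, hj'⟩ := Pattern.count_pos.1 (by omega : 0 < Pattern.count τ .blue)
  have blue_other (o) (hoj : τ o ≠ .blue) (o') (ho' : o' ≠ o) (l) : B.Adj (κ i) (γ o' l) := by
    have : o' = j := by grind
    subst this
    have := fits o'
    rw [hj'] at this
    exact this l
  by_cases hd : (B.comap κ).degree i = 0
  · obtain ⟨o, ho⟩ := Pattern.count_pos.1 (by omega : 0 < Pattern.count τ .redPath)
    have fits_o := fits o
    rw [ho] at fits_o
    obtain ⟨l, -, h₁, h₂⟩ := fits_o
    have shift : ∀ l : Fin 5, l + 1 + 1 = l + 2 := by decide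
    exact ⟨o, blue_other o (by simp [ho]), ⟨l + 1, h₁, (shift l).symm ▸ h₂⟩, .inl hd⟩
  · obtain ⟨o, ho⟩ := Pattern.count_pos.1 (by omega : 0 < Pattern.count τ .red)
    have fits_o := fits o
    rw [ho] at fits_o
    exact ⟨o, blue_other o (by simp [ho]), ⟨0, fits_o 0, fits_o 1⟩, .inr ⟨by omega, fits_o⟩⟩

theorem IsJoin.degree_ne_three [DecidableRel (B.comap κ).Adj] (hj : IsJoin (B ⊔ R) κ γ)
    (hB : B.CliqueFree 3) (hR : R.CliqueFree 4) (x : Fin 4) : (B.comap κ).degree x ≠ 3 := by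
  intro hx
  have xB {y} (hy : x ≠ y) : B.Adj (κ x) (κ y) :=
    ((B.comap κ).degree_eq_card_sub_one x).1 (by simpa using hx) hy
  have leaves_red {y z} (hy : x ≠ y) (hz : x ≠ z) (hyz : y ≠ z) : R.Adj (κ y) (κ z) :=
    adj_right_of_path hB (xB hy).symm (xB hz) (hj.clique hyz)
  have leaf (y) (hy : x ≠ y) : ∃ o, (∀ o' ≠ o, ∀ l, B.Adj (κ y) (γ o' l)) ∧
      ∀ l, R.Adj (κ y) (γ o l) := by
    rcases hj.degree_eq_three_or hB hR y with h | ⟨o, blue, -, h | ⟨-, red⟩⟩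
    · obtain ⟨z, hz, hxz⟩ := (by decide : ∀ x y : Fin 4, ∃ z, y ≠ z ∧ x ≠ z) x y
      have yB := ((B.comap κ).degree_eq_card_sub_one y).1 (by simpa using h) hz
      exact (not_cliqueFree_three (xB hy) (xB hxz) yB hB).elim
    · exact absurd (((B.comap κ).degree_pos_iff_exists_adj y).2 ⟨x, (xB hy).symm⟩) (by omega)
    · exact ⟨o, blue, red⟩
  choose! o blue red using leaf
  have differ {y y' z} (hy : x ≠ y) (hy' : x ≠ y') (hz : x ≠ z) (hyy' : y ≠ y') (hyz : y ≠ z)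
      (hy'z : y' ≠ z) : o y ≠ o y' := by
    intro h
    by_cases h' : o y = o z
    · exact not_cliqueFree_four (leaves_red hy hy' hyy') (leaves_red hy hz hyz) (red y hy 0)
        (leaves_red hy' hz hy'z) (h ▸ red y' hy' 0) (h' ▸ red z hz 0) hR
    · exact not_forall_blue_of_red_edge hB hR (hj.pentagon (o y)) (leaves_red hy hy' hyy')
        (red y hy) ⟨0, h ▸ red y' hy' 0, h ▸ red y' hy' 1⟩ (blue z hz (o y) h')
  obtain ⟨y₁, y₂, y₃, h₁, h₂, h₃, h₁₂, h₁₃, h₂₃⟩ := (by decide : ∀ x : Fin 4,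
    ∃ y₁ y₂ y₃, x ≠ y₁ ∧ x ≠ y₂ ∧ x ≠ y₃ ∧ y₁ ≠ y₂ ∧ y₁ ≠ y₃ ∧ y₂ ≠ y₃) x
  have := differ h₁ h₂ h₃ h₁₂ h₁₃ h₂₃
  have := differ h₁ h₃ h₂ h₁₃ h₁₂ h₂₃.symm
  have := differ h₂ h₃ h₁ h₂₃ h₁₂.symm h₁₃.symm
  omega

theorem joinArrows_four_two_four : JoinArrows.{u} 4 2 4 := by
  classical
  rintro V B R hB ⟨κ, γ, hj, -⟩ hR
  choose o blue redEdge red using fun i =>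
    (hj.degree_eq_three_or hB hR i).resolve_left (hj.degree_ne_three hB hR i)
  obtain ⟨x, y, xy⟩ : ∃ x y, (B.comap κ).Adj x y := by
    by_contra! h
    exact not_cliqueFree_of_pairwise (f := κ)
      (fun i i' hne => (hj.clique hne).resolve_left (h i i')) hR
  have pendant {x y} (xy : (B.comap κ).Adj x y) :
      (∀ l, R.Adj (κ x) (γ (o x) l)) ∧ ∀ z, x ≠ z → z ≠ y → R.Adj (κ x) (κ z) := by
    obtain ⟨hdeg, hred⟩ := (red x).resolve_left
      (((B.comap κ).degree_pos_iff_exists_adj x).2 ⟨y, xy⟩).ne'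
    refine ⟨hred, fun z hxz hzy => (hj.clique hxz).resolve_left fun xz => hzy ?_⟩
    exact (degree_eq_one_iff_existsUnique_adj.1 hdeg).unique xz xy
  have differ : o x ≠ o y := fun h => by
    obtain ⟨o', ho'⟩ : ∃ o', o' ≠ o x := exists_ne _
    exact not_cliqueFree_three (G := B) xy (blue x o' ho' 0) (blue y o' (h ▸ ho') 0) hB
  have separate {x y z} (xy : (B.comap κ).Adj x y) (differ : o x ≠ o y) (hxz : x ≠ z)
      (hzy : z ≠ y) : o z ≠ o x := fun h =>
    not_forall_blue_of_red_edge hB hR (hj.pentagon (o x)) ((pendant xy).2 z hxz hzy)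
      (pendant xy).1 (h ▸ redEdge z) (blue y (o x) differ)
  obtain ⟨z, hxz, hyz⟩ := (by decide : ∀ x y : Fin 4, ∃ z, x ≠ z ∧ y ≠ z) x y
  have := separate xy differ hxz hyz.symm
  have := separate xy.symm differ.symm hyz hxz.symm
  omega

end FourTwo

section OneThree

universe u

variable {V : Type u} {B R : SimpleGraph V} {α β γ δ ε : Fin 5 → V}
  {a a' b c u u' v w w' x y y' z : V}

theorem exists_adj_left_of_star (hR : R.CliqueFree 4) (va : R.Adj v a) (vb : R.Adj v b)
    (vc : R.Adj v c) (ab : (B ⊔ R).Adj a b) (ac : (B ⊔ R).Adj a c) (bc : (B ⊔ R).Adj b c) :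
    B.Adj a b ∨ B.Adj a c ∨ B.Adj b c := by
  by_contra! h
  exact not_cliqueFree_four va vb vc (ab.resolve_left h.1) (ac.resolve_left h.2.1)
    (bc.resolve_left h.2.2) hR

/-- Every edge of the pentagon `δ` has an endpoint adjacent to `x`. -/
def MeetsEdges (B : SimpleGraph V) (x : V) (δ : Fin 5 → V) : Prop :=
  ∀ l, B.Adj x (δ l) ∨ B.Adj x (δ (l + 1))

namespace MeetsEdges

theorem of_red (hR : R.CliqueFree 4) (hδ : IsPentagon R δ) (vx : R.Adj v x)
    (vδ : ∀ l, R.Adj v (δ l)) (xδ : ∀ l, (B ⊔ R).Adj x (δ l)) : MeetsEdges B x δ := by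
  intro l
  by_contra! h
  exact not_cliqueFree_four vx (vδ _) (vδ _) ((xδ _).resolve_left h.1)
    ((xδ _).resolve_left h.2) (hδ l) hR

theorem not_adj (hx : MeetsEdges B x δ) (hy : MeetsEdges B y δ) (hB : B.CliqueFree 3) :
    ¬B.Adj x y := fun xy =>
  let ⟨_, h, h'⟩ := exists_and_of_forall_or_add odd_card_fin_five 1 hx hy
  not_cliqueFree_three xy h h' hB

theorem not_adj_of_adj_left (hz : MeetsEdges B z δ) (hB : B.CliqueFree 3) (hR : R.CliqueFree 4)
    (hδ : IsPentagon R δ) (yδ : ∀ l, (B ⊔ R).Adj y (δ l)) (yδ' : ∀ l, (B ⊔ R).Adj y' (δ l))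
    (zy : B.Adj z y) (zy' : B.Adj z y') : ¬(B ⊔ R).Adj y y' := by
  intro yy'
  obtain ⟨l, h, h'⟩ := exists_and_add_of_forall_or_add odd_card_fin_five 1 hz
  exact not_cliqueFree_four (adj_right_of_path hB zy.symm zy' yy')
    (adj_right_of_path hB zy.symm h (yδ l)) (adj_right_of_path hB zy.symm h' (yδ (l + 1)))
    (adj_right_of_path hB zy'.symm h (yδ' l)) (adj_right_of_path hB zy'.symm h' (yδ' (l + 1)))
    (hδ l) hR

end MeetsEdges

section TwoRedPentagons

theorem not_adj_right_of_adj_left (hB : B.CliqueFree 3) (hR : R.CliqueFree 4)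
    (hε : IsPentagon (B ⊔ R) ε) (vε : ∀ l, R.Adj v (ε l)) (vx : R.Adj v x) (vy : R.Adj v y)
    (vz : R.Adj v z) (xε : ∀ l, (B ⊔ R).Adj x (ε l)) (yε : ∀ l, (B ⊔ R).Adj y (ε l))
    (zε : ∀ l, (B ⊔ R).Adj z (ε l)) (yx : B.Adj y x) : ¬R.Adj y z := by
  intro yz
  rcases exists_and_add_or_exists_and_add odd_card_fin_five 1 yε with ⟨l, h, h'⟩ | ⟨l, h, h'⟩
  · exact not_cliqueFree_four vx (vε l) (vε (l + 1)) (adj_right_of_path hB yx.symm h (xε l))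
      (adj_right_of_path hB yx.symm h' (xε (l + 1))) (adj_right_of_path hB h.symm h' (hε l)) hR
  · have zl {l} (h : R.Adj y (ε l)) : B.Adj z (ε l) := (zε l).resolve_right fun zl =>
      not_cliqueFree_four vy vz (vε l) yz h zl hR
    exact not_cliqueFree_four vy (vε l) (vε (l + 1)) h h'
      (adj_right_of_path hB (zl h).symm (zl h') (hε l)) hR

theorem isPentagon_left_or_isPentagon_right (hB : B.CliqueFree 3) (hR : R.CliqueFree 4)
    (hδ : IsPentagon (B ⊔ R) δ) (hε : IsPentagon (B ⊔ R) ε) (vδ : ∀ l, R.Adj v (δ l))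
    (vε : ∀ l, R.Adj v (ε l)) (δε : ∀ i j, (B ⊔ R).Adj (δ i) (ε j)) :
    IsPentagon B δ ∨ IsPentagon R δ := by
  refine or_iff_not_imp_right.2 fun notRed => ?_
  obtain ⟨k, hk⟩ := not_forall.1 notRed
  refine forall_of_forall_imp_add_one (fun l hl => ?_) ((hδ k).resolve_right hk)
  exact (hδ (l + 1)).resolve_right <| not_adj_right_of_adj_left hB hR hε vε (vδ l)
    (vδ (l + 1)) (vδ (l + 1 + 1)) (δε _) (δε _) (δε _) hl.symm

theorem not_isPentagon_left_of_isPentagon_right (hB : B.CliqueFree 3) (hR : R.CliqueFree 4)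
    (hδ : IsPentagon R δ) (vδ : ∀ l, R.Adj v (δ l)) (vε : ∀ l, R.Adj v (ε l))
    (δε : ∀ i j, (B ⊔ R).Adj (δ i) (ε j)) : ¬IsPentagon B ε := fun hε =>
  have meets (l) : MeetsEdges B (ε l) δ := .of_red hR hδ (vε l) vδ fun i => (δε i l).symm
  (meets 0).not_adj (meets 1) hB (hε 0)

end TwoRedPentagons

section ThreeRedPentagons

theorem not_adj_left_of_forall_not_adj (hB : B.CliqueFree 3) (hR : R.CliqueFree 4)
    (hβ : IsPentagon R β) (aa' : R.Adj a a') (aβ : ∀ i, (B ⊔ R).Adj a (β i))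
    (aβ' : ∀ i, (B ⊔ R).Adj a' (β i)) (h : ∀ i, ¬B.Adj a (β i)) (hx : MeetsEdges B x β) :
    ¬B.Adj a' x := by
  have meets : MeetsEdges B a' β := fun i => by
    have := exists_adj_left_between hR aa' (hβ i) (aβ _) (aβ _) (aβ' _) (aβ' _)
    simpa only [h, false_or] using this
  exact meets.not_adj hx hB

variable (hB : B.CliqueFree 3) (hR : R.CliqueFree 4) (hα : IsPentagon R α) (hβ : IsPentagon R β)
  (hγ : IsPentagon R γ) (αβ : ∀ i j, (B ⊔ R).Adj (α i) (β j))
  (αγ : ∀ i j, (B ⊔ R).Adj (α i) (γ j)) (hβγ : ∀ i, MeetsEdges B (β i) γ)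
  (hγβ : ∀ j, MeetsEdges B (γ j) β)

include hB hR hα hβ hγ αβ αγ hβγ hγβ

theorem exists_adj_left_of_isPentagon_right (k : Fin 5) : ∃ i, B.Adj (α k) (β i) := by
  by_contra! hk
  have stepβ {l} (h : ∀ i, ¬B.Adj (α l) (β i)) (j) : ¬B.Adj (α (l + 1)) (γ j) :=
    not_adj_left_of_forall_not_adj hB hR hβ (hα l) (αβ l) (αβ (l + 1)) h (hγβ j)
  have stepγ {l} (h : ∀ j, ¬B.Adj (α l) (γ j)) (i) : ¬B.Adj (α (l + 1)) (β i) :=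
    not_adj_left_of_forall_not_adj hB hR hγ (hα l) (αγ l) (αγ (l + 1)) h (hβγ i)
  have h₁ := stepβ hk
  have h₅ := stepβ (stepγ (stepβ (stepγ h₁)))
  have shift : ∀ l : Fin 5, l + 1 + 1 + 1 + 1 + 1 = l := by decide
  rw [shift] at h₅
  have := exists_adj_left_between hR (hα k) (hγ 0) (αγ _ _) (αγ _ _) (αγ _ _) (αγ _ _)
  simp only [h₁, h₅, or_self] at this

theorem false_of_three_isPentagon_right (βγ : ∀ i j, (B ⊔ R).Adj (β i) (γ j)) : False := by
  have disjointβ (k) : Disjoint {i | B.Adj (α k) (β i)} {i | B.Adj (α (k + 1)) (β i)} :=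
    Set.disjoint_left.2 fun i h h' => (hβγ i).not_adj_of_adj_left hB hR hγ (αγ k) (αγ (k + 1))
      h.symm h'.symm (.inr (hα k))
  have disjointγ (k) : Disjoint {j | B.Adj (α k) (γ j)} {j | B.Adj (α (k + 1)) (γ j)} :=
    Set.disjoint_left.2 fun j h h' => (hγβ j).not_adj_of_adj_left hB hR hβ (αβ k) (αβ (k + 1))
      h.symm h'.symm (.inr (hα k))
  obtain ⟨k, i, hi, j, hj, hi₂, hj₂⟩ := exists_notMem_and_notMem_add_two disjointβ disjointγ
    (exists_adj_left_of_isPentagon_right hB hR hα hβ hγ αβ αγ hβγ hγβ)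
    (exists_adj_left_of_isPentagon_right hB hR hα hγ hβ αγ αβ hγβ hβγ)
  have hi₁ := (disjointβ k).notMem_of_mem_left hi
  have hj₁ := (disjointγ k).notMem_of_mem_left hj
  have ij : R.Adj (β i) (γ j) := adj_right_of_path hB hi.symm hj (βγ i j)
  have shift : ∀ l : Fin 5, l + 1 + 1 = l + 2 := by decide
  have := exists_adj_left_between hR (shift k ▸ hα (k + 1)) ij (αβ _ _) (αγ _ _) (αβ _ _) (αγ _ _)
  simp only [Set.mem_ofPred_eq] at hi₁ hj₁ hi₂ hj₂
  tauto

end ThreeRedPentagons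

section TwoBluePentagons

theorem exists_not_adj_and_not_adj (hB : B.CliqueFree 3) (hβ : IsPentagon B β) (a a' : V) :
    ∃ i, ¬B.Adj a (β i) ∧ ¬B.Adj a' (β i) :=
  have indep (x) (i) : ¬(B.Adj x (β i) ∧ B.Adj x (β (i + 1))) := fun h =>
    not_cliqueFree_three h.1 h.2 (hβ i) hB
  exists_not_and_not odd_card_fin_five 1 (indep a) (indep a')

theorem adj_left_of_not_adj (hR : R.CliqueFree 4) (aa' : R.Adj a a') (ax : (B ⊔ R).Adj a x)
    (ay : (B ⊔ R).Adj a y) (ax' : (B ⊔ R).Adj a' x) (ay' : (B ⊔ R).Adj a' y)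
    (xy : (B ⊔ R).Adj x y) (nax : ¬B.Adj a x) (nay : ¬B.Adj a y) (nax' : ¬B.Adj a' x)
    (nay' : ¬B.Adj a' y) : B.Adj x y :=
  xy.resolve_right fun xy => not_cliqueFree_four aa' (ax.resolve_left nax) (ay.resolve_left nay)
    (ax'.resolve_left nax') (ay'.resolve_left nay') xy hR

variable (hB : B.CliqueFree 3) (hR : R.CliqueFree 4) (hα : IsPentagon R α) (hβ : IsPentagon B β)
  (αβ : ∀ i j, (B ⊔ R).Adj (α i) (β j)) (αu : ∀ i, (B ⊔ R).Adj (α i) u)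
  (αu' : ∀ i, (B ⊔ R).Adj (α i) u') (βu : ∀ i, (B ⊔ R).Adj (β i) u)
  (βu' : ∀ i, (B ⊔ R).Adj (β i) u') (uu' : B.Adj u u')

include hB hR hα hβ αβ αu αu' βu βu' uu'

theorem meetsEdges_or_not_adj_and_adj :
    MeetsEdges B u α ∨ ∀ k, ¬(B.Adj (α k) u ∧ B.Adj (α (k + 1)) u) := by
  refine or_iff_not_imp_left.2 fun hu k ⟨h, h'⟩ => ?_
  obtain ⟨m, hm⟩ := not_forall.1 hu
  simp only [not_or, B.adj_comm u] at hm
  obtain ⟨i, hi, hi'⟩ := exists_not_adj_and_not_adj hB hβ (α m) (α (m + 1))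
  have iu := adj_left_of_not_adj hR (hα m) (αβ m i) (αu m) (αβ _ i) (αu _) (βu i) hi hm.1 hi' hm.2
  exact not_cliqueFree_four (hα k) (adj_right_of_path hB h iu.symm (αβ k i))
    (adj_right_of_path hB h uu' (αu' k)) (adj_right_of_path hB h' iu.symm (αβ (k + 1) i))
    (adj_right_of_path hB h' uu' (αu' (k + 1))) (adj_right_of_path hB iu uu' (βu' i)) hR

theorem exists_adj_left_of_isPentagon_left (k : Fin 5) :
    B.Adj (α k) u ∨ B.Adj (α k) u' ∨ B.Adj (α (k + 1)) u ∨ B.Adj (α (k + 1)) u' := by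
  by_contra! h
  obtain ⟨i, hi, hi'⟩ := exists_not_adj_and_not_adj hB hβ (α k) (α (k + 1))
  have iu := adj_left_of_not_adj hR (hα k) (αβ k i) (αu k) (αβ _ i) (αu _) (βu i) hi h.1 hi' h.2.2.1
  have iu' := adj_left_of_not_adj hR (hα k) (αβ k i) (αu' k) (αβ _ i) (αu' _) (βu' i) hi h.2.1 hi'
    h.2.2.2
  exact not_cliqueFree_three iu iu' uu' hB

theorem adj_of_not_adj_between {l : Fin 5} (hu₁ : ¬B.Adj (α (l + 1)) u)
    (hu₁' : ¬B.Adj (α (l + 1)) u') (hu₀' : B.Adj (α l) u') : B.Adj (α (l + 2)) u' := by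
  by_contra hu₂'
  have hu₀ : ¬B.Adj (α l) u := fun h => not_cliqueFree_three h hu₀' uu' hB
  obtain ⟨i, hi, hi'⟩ := exists_not_adj_and_not_adj hB hβ (α (l + 1)) (α (l + 2))
  have shift : ∀ l : Fin 5, l + 1 + 1 = l + 2 := by decide
  have iu' := adj_left_of_not_adj hR (shift l ▸ hα (l + 1)) (αβ _ i) (αu' _) (αβ _ i) (αu' _)
    (βu' i) hi hu₁' hi' hu₂'
  have iu : R.Adj (β i) u := adj_right_of_path hB iu' uu'.symm (βu i)
  have li : B.Adj (α l) (β i) := by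
    have := exists_adj_left_between hR (hα l) iu (αβ _ _) (αu _) (αβ _ _) (αu _)
    tauto
  exact not_cliqueFree_three li hu₀' iu' hB

theorem meetsEdges_or_meetsEdges : MeetsEdges B u α ∨ MeetsEdges B u' α := by
  by_contra! h
  have indep := (meetsEdges_or_not_adj_and_adj hB hR hα hβ αβ αu αu' βu βu' uu').resolve_left h.1
  have indep' :=
    (meetsEdges_or_not_adj_and_adj hB hR hα hβ αβ αu' αu βu' βu uu'.symm).resolve_left h.2
  obtain ⟨l, ⟨hu, hu'⟩, ⟨hl, hl'⟩ | ⟨hl, hl'⟩⟩ := exists_neither_between indep indep'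
    (fun _ hl => not_cliqueFree_three hl.1 hl.2 uu' hB)
    (exists_adj_left_of_isPentagon_left hB hR hα hβ αβ αu αu' βu βu' uu')
  · exact hl' (adj_of_not_adj_between hB hR hα hβ αβ αu' αu βu' βu uu'.symm hu' hu hl)
  · exact hl' (adj_of_not_adj_between hB hR hα hβ αβ αu αu' βu βu' uu' hu hu' hl)

omit αu αu' βu βu' uu'

theorem false_of_two_isPentagon_left (hγ : IsPentagon B γ)
    (αγ : ∀ i j, (B ⊔ R).Adj (α i) (γ j)) (βγ : ∀ i j, (B ⊔ R).Adj (β i) (γ j)) : False := by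
  obtain ⟨j, h, h'⟩ := exists_and_add_of_forall_or_add odd_card_fin_five 1
    (p := fun j => MeetsEdges B (γ j) α) fun j =>
      meetsEdges_or_meetsEdges hB hR hα hβ αβ (fun i => αγ i j) (fun i => αγ i (j + 1))
        (fun i => βγ i j) (fun i => βγ i (j + 1)) (hγ j)
  exact h.not_adj h' hB (hγ j)

end TwoBluePentagons

theorem false_of_blue_red_red (hB : B.CliqueFree 3) (hR : R.CliqueFree 4)
    (vα : ∀ l, B.Adj v (α l)) (vβ : ∀ l, R.Adj v (β l)) (vγ : ∀ l, R.Adj v (γ l))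
    (hα : IsPentagon (B ⊔ R) α) (hβ : IsPentagon (B ⊔ R) β) (hγ : IsPentagon (B ⊔ R) γ)
    (αβ : ∀ i j, (B ⊔ R).Adj (α i) (β j)) (αγ : ∀ i j, (B ⊔ R).Adj (α i) (γ j))
    (βγ : ∀ i j, (B ⊔ R).Adj (β i) (γ j)) : False := by
  have γβ (i j) : (B ⊔ R).Adj (γ i) (β j) := (βγ j i).symm
  have hα : IsPentagon R α := fun l => adj_right_of_path hB (vα l).symm (vα _) (hα l)
  rcases isPentagon_left_or_isPentagon_right hB hR hβ hγ vβ vγ βγ with hβ' | hβ' <;>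
    rcases isPentagon_left_or_isPentagon_right hB hR hγ hβ vγ vβ γβ with hγ' | hγ'
  · exact false_of_two_isPentagon_left hB hR hα hβ' αβ hγ' αγ βγ
  · exact not_isPentagon_left_of_isPentagon_right hB hR hγ' vγ vβ γβ hβ'
  · exact not_isPentagon_left_of_isPentagon_right hB hR hβ' vβ vγ βγ hγ'
  · exact false_of_three_isPentagon_right hB hR hα hβ' hγ' αβ αγ
      (fun i => .of_red hR hγ' (vβ i) vγ (βγ i)) (fun j => .of_red hR hβ' (vγ j) vβ (γβ j)) βγ

section RedPath

theorem adj_left_iff_not_of_meetsEdges (hB : B.CliqueFree 3)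
    (hx : B.Adj x a ∨ MeetsEdges B x β) (hy : B.Adj y a ∨ MeetsEdges B y β) (xy : B.Adj x y) :
    B.Adj x a ↔ ¬B.Adj y a :=
  ⟨fun h h' => not_cliqueFree_three xy h h' hB, fun h' => hx.resolve_right fun h =>
    h.not_adj (hy.resolve_left h') hB xy⟩

theorem not_isPentagon_left_of_meetsEdges (hB : B.CliqueFree 3)
    (h : ∀ i, B.Adj (α i) a ∨ MeetsEdges B (α i) β) : ¬IsPentagon B α := fun hα =>
  let ⟨i, hi⟩ := exists_iff_add odd_card_fin_five 1 fun i => B.Adj (α i) a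
  iff_not_self (hi.symm.trans (adj_left_iff_not_of_meetsEdges hB (h i) (h (i + 1)) (hα i)))

variable (hB : B.CliqueFree 3) (hR : R.CliqueFree 4) (vα : ∀ i, R.Adj v (α i)) (vw : R.Adj v w)
  (vw' : R.Adj v w') (hα : IsPentagon (B ⊔ R) α) (hβ : IsPentagon R β)
  (αβ : ∀ i j, (B ⊔ R).Adj (α i) (β j)) (αw : ∀ i, (B ⊔ R).Adj (α i) w)
  (αw' : ∀ i, (B ⊔ R).Adj (α i) w') (wβ : ∀ j, (B ⊔ R).Adj w (β j))
  (ww' : (B ⊔ R).Adj w' w)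

include hB hR vα vw vw' hα hβ αβ αw αw' wβ ww'

theorem isPentagon_left_of_meetsEdges (hw' : MeetsEdges B w' β) : IsPentagon B α := by
  have edge {x} (vx : R.Adj v x) (αx : ∀ i, (B ⊔ R).Adj (α i) x) (i) :=
    exists_adj_left_of_star hR (vα i) (vα (i + 1)) vx (hα i) (αx i) (αx (i + 1))
  obtain ⟨i, hi, hi'⟩ := exists_not_and_not_add odd_card_fin_five 1
    (p := fun i => B.Adj w' (α i)) fun i h =>
      hw'.not_adj_of_adj_left hB hR hβ (αβ i) (αβ (i + 1)) h.1 h.2 (hα i)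
  have blue : B.Adj (α i) (α (i + 1)) := (edge vw' αw' i).resolve_right fun h =>
    h.elim (hi ·.symm) (hi' ·.symm)
  have w'w : B.Adj w' w := by
    have star (j) := exists_adj_left_of_star hR (vα j) vw' vw (αw' j) (αw j) ww'
    by_contra nw
    have notBlue {j} (hj : ¬B.Adj w' (α j)) : B.Adj (α j) w :=
      ((star j).resolve_left (hj ·.symm)).resolve_right nw
    exact not_cliqueFree_three blue (notBlue hi) (notBlue hi') hB
  have none (j) : ¬B.Adj (α j) w' := fun h =>
    hw'.not_adj_of_adj_left hB hR hβ (αβ j) wβ h.symm w'w (αw j)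
  exact fun j => (edge vw' αw' j).resolve_right fun h => h.elim (none _) (none _)

variable (w'β : ∀ j, (B ⊔ R).Adj w' (β j))
  (hαβ : ∀ i, B.Adj (α i) a ∨ MeetsEdges B (α i) β)

include w'β hαβ

omit vw' in
theorem adj_succ_and_adj_pred_of_adj_left (w'a : B.Adj w' a) {i : Fin 5} (hi : B.Adj (α i) w') :
    (B.Adj (α (i + 1)) w ∧ ¬B.Adj (α (i + 1)) w') ∧
      B.Adj (α (i + 4)) w ∧ ¬B.Adj (α (i + 4)) w' := by
  have meets {j} (h : B.Adj (α j) w') : MeetsEdges B (α j) β :=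
    (hαβ j).resolve_left fun ha => not_cliqueFree_three h ha w'a hB
  have not_adj_w {j} (h : B.Adj (α j) w') : ¬B.Adj (α j) w := fun h' =>
    (meets h).not_adj_of_adj_left hB hR hβ w'β wβ h h' ww'
  have neighbor {x} (vx : R.Adj v x) (xβ : ∀ j, (B ⊔ R).Adj x (β j)) (ix : (B ⊔ R).Adj (α i) x)
      (xw : (B ⊔ R).Adj x w) (xw' : (B ⊔ R).Adj x w') : B.Adj x w := by
    have star := exists_adj_left_of_star hR (vα i) vx vw ix (αw i) xw
    refine (star.resolve_left fun h => ?_).resolve_left (not_adj_w hi)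
    exact (meets hi).not_adj_of_adj_left hB hR hβ xβ w'β h hi xw'
  have shift : ∀ i : Fin 5, i + 4 + 1 = i := by decide
  have succ := neighbor (vα (i + 1)) (αβ _) (hα i) (αw _) (αw' _)
  have pred := neighbor (vα (i + 4)) (αβ _) (shift i ▸ hα (i + 4)).symm (αw _) (αw' _)
  exact ⟨⟨succ, fun h => not_adj_w h succ⟩, pred, fun h => not_adj_w h pred⟩

theorem not_adj_left_of_forall_adj_or_meetsEdges (w'a : B.Adj w' a) (i : Fin 5) :
    ¬B.Adj (α i) w' := by
  intro hi
  have around {i} := adj_succ_and_adj_pred_of_adj_left hB hR vα vw hα hβ αβ αw αw' wβ ww' w'β hαβ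
    w'a (i := i)
  have blue {i} (h : ¬B.Adj (α i) w') (h' : ¬B.Adj (α (i + 1)) w') : B.Adj (α i) (α (i + 1)) :=
    (exists_adj_left_of_star hR (vα i) (vα (i + 1)) vw' (hα i) (αw' i) (αw' (i + 1))).resolve_right
      (not_or.2 ⟨h, h'⟩)
  have triangle {i} (h : B.Adj (α i) w) (h' : B.Adj (α (i + 1)) w) : ¬B.Adj (α i) (α (i + 1)) :=
    fun e => not_cliqueFree_three e h h' hB
  have shift : ∀ i : Fin 5, i + 1 + 1 = i + 2 ∧ i + 2 + 1 = i + 3 ∧ i + 3 + 1 = i + 4 ∧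
    i + 3 + 4 = i + 2 := by decide
  obtain ⟨e₁, e₂, e₃, e₄⟩ := shift i
  have apart₂ : ¬B.Adj (α (i + 2)) w' := by grind
  have apart₃ : ¬B.Adj (α (i + 3)) w' := by grind
  have p₁ : B.Adj (α (i + 1)) (α (i + 2)) := by grind
  have p₂ : B.Adj (α (i + 2)) (α (i + 3)) := by grind
  have p₃ : B.Adj (α (i + 3)) (α (i + 4)) := by grind
  have adj_a {j x} (hw : B.Adj (α j) w) (hx : B.Adj (α j) x) (xβ : ∀ l, (B ⊔ R).Adj x (β l))
      (xw : (B ⊔ R).Adj x w) : B.Adj (α j) a :=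
    (hαβ j).resolve_right fun h => h.not_adj_of_adj_left hB hR hβ xβ wβ hx hw xw
  have a₁ := adj_a (around hi).1.1 p₁ (αβ _) (αw _)
  have a₄ := adj_a (around hi).2.1 p₃.symm (αβ _) (αw _)
  have alternate {j k} (h : B.Adj (α j) (α k)) :=
    adj_left_iff_not_of_meetsEdges hB (hαβ j) (hαβ k) h
  have := alternate p₁
  have := alternate p₂
  have := alternate p₃
  tauto

theorem isPentagon_left_of_adj_left (w'a : B.Adj w' a) : IsPentagon B α := fun i =>
  (exists_adj_left_of_star hR (vα i) (vα (i + 1)) vw' (hα i) (αw' i) (αw' (i + 1))).resolve_right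
    (have none := not_adj_left_of_forall_adj_or_meetsEdges hB hR vα vw vw' hα hβ αβ αw αw' wβ ww'
      w'β hαβ w'a
    not_or.2 ⟨none _, none _⟩)

end RedPath

theorem false_of_red_blue_redPath (hB : B.CliqueFree 3) (hR : R.CliqueFree 4)
    (vα : ∀ i, R.Adj v (α i)) (vβ : ∀ j, B.Adj v (β j)) (va : B.Adj v a) (vw' : R.Adj v w')
    (vw : R.Adj v w) (hα : IsPentagon (B ⊔ R) α) (hβ : IsPentagon (B ⊔ R) β)
    (αβ : ∀ i j, (B ⊔ R).Adj (α i) (β j)) (αa : ∀ i, (B ⊔ R).Adj (α i) a)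
    (αw' : ∀ i, (B ⊔ R).Adj (α i) w') (αw : ∀ i, (B ⊔ R).Adj (α i) w)
    (aβ : ∀ j, (B ⊔ R).Adj a (β j)) (w'β : ∀ j, (B ⊔ R).Adj w' (β j))
    (wβ : ∀ j, (B ⊔ R).Adj w (β j)) (w'a : (B ⊔ R).Adj w' a) (w'w : (B ⊔ R).Adj w' w) :
    False := by
  have hβ : IsPentagon R β := fun l => adj_right_of_path hB (vβ l).symm (vβ _) (hβ l)
  have aβ (j) : R.Adj a (β j) := adj_right_of_path hB va.symm (vβ j) (aβ j)
  have hαβ (i) : B.Adj (α i) a ∨ MeetsEdges B (α i) β :=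
    (αa i).imp_right fun h => .of_red hR hβ h.symm aβ (αβ i)
  refine not_isPentagon_left_of_meetsEdges hB hαβ ?_
  rcases w'a with w'a | w'a
  · exact isPentagon_left_of_adj_left hB hR vα vw vw' hα hβ αβ αw αw' wβ w'w w'β hαβ w'a
  · exact isPentagon_left_of_meetsEdges hB hR vα vw vw' hα hβ αβ αw αw' wβ w'w
      (.of_red hR hβ w'a.symm aβ w'β)

theorem joinArrows_one_three_four : JoinArrows.{u} 1 3 4 := by
  classical
  rintro V B R hB ⟨κ, γ, hj, -⟩ hR
  obtain ⟨τ, fits, total, degree, blue, red⟩ := hj.exists_patterns hB hR 0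
  have red₆ := red 6 0 joinArrows_six_zero_three
  have red₃ := red 3 1 joinArrows_three_one_three
  simp only [Fintype.card_fin] at *
  have shift : ∀ l : Fin 5, l + 1 + 1 = l + 2 := by decide
  obtain ⟨a, ha⟩ := Pattern.count_pos.1 (by omega : 0 < Pattern.count τ .blue)
  have blue_a := ha ▸ fits a
  have split : 1 < Pattern.count τ .red ∨
      0 < Pattern.count τ .red ∧ 0 < Pattern.count τ .redPath := by omega
  rcases split with h | ⟨h, h'⟩
  · obtain ⟨b, c, hbc, hb, hc⟩ := Pattern.exists_ne_of_one_lt_count h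
    have hab : a ≠ b := by grind
    have hac : a ≠ c := by grind
    have red_b := hb ▸ fits b
    have red_c := hc ▸ fits c
    exact false_of_blue_red_red hB hR blue_a red_b red_c (hj.pentagon a)
      (hj.pentagon b) (hj.pentagon c) (hj.cross hab) (hj.cross hac) (hj.cross hbc)
  · obtain ⟨b, hb⟩ := Pattern.count_pos.1 h
    obtain ⟨c, hc⟩ := Pattern.count_pos.1 h'
    obtain ⟨l, h₀, h₁, h₂⟩ := hc ▸ fits c
    have red_b := hb ▸ fits b
    have hba : b ≠ a := by grind
    have hbc : b ≠ c := by grind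
    have hca : c ≠ a := by grind
    exact false_of_red_blue_redPath hB hR red_b blue_a h₀ h₁ h₂ (hj.pentagon b)
      (hj.pentagon a) (hj.cross hba) (fun _ => hj.cross hbc _ _) (fun _ => hj.cross hbc _ _)
      (fun _ => hj.cross hbc _ _) (hj.cross hca _) (hj.cross hca _) (hj.cross hca _)
      (hj.pentagon c l).symm (shift l ▸ hj.pentagon c (l + 1))

end OneThree

section FourFour

universe u

variable {V : Type u} {B R : SimpleGraph V} {κ : Fin 4 → V} {γ : Fin 4 → Fin 5 → V}

theorem IsJoin.forall_adj_right_and_exists_ne (hj : IsJoin (B ⊔ R) κ γ) (hB : B.CliqueFree 3)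
    (hR : R.CliqueFree 5) (i : Fin 4) :
    (∀ i' ≠ i, R.Adj (κ i) (κ i')) ∧
      (∀ j, (∀ l, R.Adj (κ i) (γ j l)) ∨ ∀ l, B.Adj (κ i) (γ j l)) ∧
      ∃ j j', j ≠ j' ∧ (∀ l, R.Adj (κ i) (γ j l)) ∧ ∀ l, R.Adj (κ i) (γ j' l) := by
  classical
  obtain ⟨τ, fits, total, -, blue, red⟩ := hj.exists_patterns hB hR i
  have red₉ := red 9 0 joinArrows_nine_zero_four
  have red₄ := red 4 2 joinArrows_four_two_four
  have red₁ := red 1 3 joinArrows_one_three_four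
  simp only [Fintype.card_fin] at *
  refine ⟨fun i' hi' => (hj.clique hi'.symm).resolve_left fun h => ?_, fun j => ?_, ?_⟩
  · have := ((B.comap κ).degree_pos_iff_exists_adj i).2 ⟨i', h⟩
    omega
  · have noPath : Pattern.count τ .redPath = 0 := by omega
    have noEdge : Pattern.count τ .blueEdge = 0 := by omega
    have fits_j := fits j
    cases hτ : τ j with rw [hτ] at fits_j
    | red => exact .inl fits_j
    | redPath => exact absurd noPath (Pattern.count_pos.2 ⟨j, hτ⟩).ne'
    | blueEdge => exact absurd noEdge (Pattern.count_pos.2 ⟨j, hτ⟩).ne'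
    | blue => exact .inr fits_j
  · obtain ⟨j, j', hne, hτ, hτ'⟩ :=
      Pattern.exists_ne_of_one_lt_count (by omega : 1 < Pattern.count τ .red)
    have red_j := hτ ▸ fits j
    have red_j' := hτ' ▸ fits j'
    exact ⟨j, j', hne, red_j, red_j'⟩

theorem joinArrows_four_four_five : JoinArrows.{u} 4 4 5 := by
  rintro V B R hB ⟨κ, γ, hj, -⟩ hR
  choose clique mono redPair using hj.forall_adj_right_and_exists_ne hB hR
  obtain ⟨j, j', hne, red_j, red_j'⟩ := redPair 0
  have edge {i j} (h : ∀ l, B.Adj (κ i) (γ j l)) : R.Adj (γ j 0) (γ j 1) :=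
    adj_right_of_path hB (h 0).symm (h 1) (hj.pentagon j 0)
  have not_both {i} (h : ∀ l, B.Adj (κ i) (γ j l)) (h' : ∀ l, B.Adj (κ i) (γ j' l)) : False :=
    have cross (l l') : R.Adj (γ j l) (γ j' l') :=
      adj_right_of_path hB (h l).symm (h' l') (hj.cross hne l l')
    not_cliqueFree_five (red_j 0) (red_j 1) (red_j' 0) (red_j' 1) (edge h) (cross 0 0) (cross 0 1)
      (cross 1 0) (cross 1 1) (edge h') hR
  have other : ∀ i : Fin 3, ∃ m : Fin 4, m ≠ 0 ∧ m ≠ i.succ ∧ m ≠ (i + 1).succ ∧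
    i.succ ≠ 0 ∧ (i + 1).succ ≠ 0 ∧ (i + 1).succ ≠ i.succ := by decide
  have one_of_two {j} (red₀ : ∀ l, R.Adj (κ 0) (γ j l)) (i : Fin 3) :
      (∀ l, B.Adj (κ i.succ) (γ j l)) ∨ ∀ l, B.Adj (κ (i + 1).succ) (γ j l) := by
    obtain ⟨m, m₀, m₁, m₂, i₀, i₁, i₂⟩ := other i
    by_contra! h
    have red₁ := (mono i.succ j).resolve_right (not_forall.2 h.1)
    have red₂ := (mono (i + 1).succ j).resolve_right (not_forall.2 h.2)
    rcases mono m j with red_m | blue_m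
    · exact not_cliqueFree_five (clique _ _ i₀) (clique _ _ i₁) (clique _ _ m₀) (red₀ 0)
        (clique _ _ i₂) (clique _ _ m₁) (red₁ 0) (clique _ _ m₂) (red₂ 0) (red_m 0) hR
    · exact not_cliqueFree_five (clique _ _ i₀) (clique _ _ i₁) (red₀ 0) (red₀ 1)
        (clique _ _ i₂) (red₁ 0) (red₁ 1) (red₂ 0) (red₂ 1) (edge blue_m) hR
  have odd : Odd (Nat.card (Fin 3)) := by
    rw [Nat.card_fin]
    decide
  obtain ⟨i, h, h'⟩ := exists_and_of_forall_or_add odd 1 (one_of_two red_j) (one_of_two red_j')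
  exact not_both h h'

end FourFour

section Arrows

universe u

theorem cliqueFree_fromEdgeSet {V : Type*} {G : SimpleGraph V} {E : Set (Sym2 V)} {n : ℕ}
    (hE : E ⊆ G.edgeSet) (h : ¬HasMonoNClique G E n) : (fromEdgeSet E).CliqueFree n :=
  fun s hs => h ⟨s, hs.mono ((fromEdgeSet_mono hE).trans_eq (fromEdgeSet_edgeSet G)),
    fun _ hx _ hy hne => (hs.isClique hx hy hne).1⟩

theorem HasJoin.arrows {V : Type u} {G : SimpleGraph V} {k m q : ℕ}
    (hG : HasJoin G Set.univ k m) (h : JoinArrows.{u} k m q) : Arrows G 3 q := by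
  rintro E₁ E₂ ⟨hE, -⟩ ⟨blue, red⟩
  have sup : fromEdgeSet E₁ ⊔ fromEdgeSet E₂ = G := by
    rw [← fromEdgeSet_union, hE, fromEdgeSet_edgeSet]
  exact h (cliqueFree_fromEdgeSet (hE ▸ Set.subset_union_left) blue) (sup ▸ hG)
    (cliqueFree_fromEdgeSet (hE ▸ Set.subset_union_right) red)

theorem HasJoin.graphJoin {V W : Type*} {G : SimpleGraph V} {H : SimpleGraph W}
    {k m k' m' : ℕ} (hG : HasJoin G Set.univ k m) (hH : HasJoin H Set.univ k' m') :
    HasJoin (graphJoin G H) Set.univ (k + k') (m + m') :=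
  ((hG.map ⟨Sum.inl, id⟩).union (hH.map ⟨Sum.inr, id⟩) (by
    rintro _ ⟨x, -, rfl⟩ _ ⟨y, -, rfl⟩
    trivial)).mono_set (Set.subset_univ _)

theorem hasJoin_top (k : ℕ) : HasJoin (⊤ : SimpleGraph (Fin k)) Set.univ k 0 :=
  ⟨id, Fin.elim0, ⟨fun _ _ h => h, fun _ j => j.elim0, fun j => j.elim0, fun j => j.elim0⟩,
    fun _ => trivial, fun j => j.elim0⟩

theorem hasJoin_cycleGraph_five : HasJoin (cycleGraph 5) Set.univ 0 1 :=
  .of_isPentagon (γ := id) (show ∀ l, (cycleGraph 5).Adj l (l + 1) by decide) fun _ => trivial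

end Arrows

end FiveCycleJoin

open FiveCycleJoin

/-- **Theorem 5.1.** `K₄ + C₅ + C₅ + C₅ + C₅ → (3,5)` : every blue-red coloring of
its edges contains a blue 3-clique or a red 5-clique. -/
theorem K4_join_four_C5_arrows_3_5 : Arrows G24 3 5 := by
  have cycle := hasJoin_cycleGraph_five
  have copy : HasJoin G24 Set.univ 4 4 :=
    (hasJoin_top 4).graphJoin (cycle.graphJoin (cycle.graphJoin (cycle.graphJoin cycle)))
  exact copy.arrows joinArrows_four_four_five
end
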